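/- arXiv:1605.00592 — 3 statements merged into one kernel-verified Lean document; each statement's English description precedes it below -/
import Mathlib

section
/- Let V be a finite-dimensional complex symplectic vector space and Γ ⊆ Sp(V) a finite subgroup. Then every ℂ-linear derivation D₀ of the invariant algebra ℂ[V]^Γ is the restriction of a unique Γ-equivariant ℂ-linear derivation D of ℂ[V] (i.e., D commutes with the Γ-action and D(ℂ[V]^Γ) ⊆ ℂ[V]^Γ with D|_{ℂ[V]^Γ} = D₀). Moreover, if D₀ is a Poisson derivation of ℂ[V]^Γ for the restricted Poisson bracket, then D is a Poisson derivation of ℂ[V]. -/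
set_option synthInstance.maxHeartbeats 1000000
set_option maxHeartbeats 1000000
open MvPolynomial

/-- `ℂ[V]` for `V = ℂ^{2n}` in Darboux coordinates indexed by `Fin n ⊕ Fin n`. -/
abbrev Pn (n : ℕ) : Type := MvPolynomial (Fin n ⊕ Fin n) ℂ

/-- `V = ℂ^{2n}`. -/
abbrev Vn (n : ℕ) : Type := (Fin n ⊕ Fin n) → ℂ

/-- matrices acting on `V`. -/
abbrev Mn (n : ℕ) : Type := Matrix (Fin n ⊕ Fin n) (Fin n ⊕ Fin n) ℂ

/-- the general linear group of `V`. -/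
abbrev GLn (n : ℕ) := Matrix.GeneralLinearGroup (Fin n ⊕ Fin n) ℂ

/-- The standard Poisson bracket on `ℂ[V]`:
`{f,g} = Σ_i (∂f/∂x_i ∂g/∂y_i − ∂f/∂y_i ∂g/∂x_i)`. -/
noncomputable def pbracket (n : ℕ) (f g : Pn n) : Pn n :=
  ∑ i : Fin n,
    (pderiv (Sum.inl i) f * pderiv (Sum.inr i) g -
      pderiv (Sum.inr i) f * pderiv (Sum.inl i) g)

/-- Substitution of a linear change of variables: `substG n A f = f ∘ A` as polynomial
functions, i.e. `X j ↦ Σ_k A j k • X k`. -/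
noncomputable def substG (n : ℕ) (A : Mn n) : Pn n →ₐ[ℂ] Pn n :=
  aeval fun j => ∑ k, A j k • X k

/-- The invariants `ℂ[V]^Γ` of a subgroup `Γ ⊆ GL(V)`. -/
noncomputable def invariants (n : ℕ) (Γ : Subgroup (GLn n)) : Subalgebra ℂ (Pn n) where
  carrier := {f | ∀ γ ∈ Γ, substG n ((γ : GLn n) : Mn n) f = f}
  mul_mem' := fun {a b} ha hb γ hγ => by rw [map_mul, ha γ hγ, hb γ hγ]
  one_mem' := fun γ hγ => map_one _
  add_mem' := fun {a b} ha hb γ hγ => by rw [map_add, ha γ hγ, hb γ hγ]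
  zero_mem' := fun γ hγ => map_zero _
  algebraMap_mem' := fun c γ hγ => (substG n ((γ : GLn n) : Mn n)).commutes c


/-!
Let a finite group `G` act on a domain `S` with invariants `R`. For `e = ∑ aᵢ ⊗ bᵢ` in `S ⊗[R] S`
and an `R`-derivation `d` of `S`, the sum over `g : G` of `∑ᵢ (g • aᵢ) • d bᵢ` depends only on the
images `∑ᵢ (g • aᵢ) * bᵢ`, because `d` is linear over the trace `∑ g, g • a`. Choosing `e` for
which only the image with `g = 1` survives shows that this image, squared, kills `Ω[S⁄R]`, and if
the inertia group of a prime `p` is trivial then `e` can be chosen with this image outside `p`.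

For `p = 0` this gives uniqueness of extensions of derivations from `R` to `S`. A derivation of `R`
extends along the separable extension of fraction fields, and its extension has no pole along a
prime element `q` as soon as the inertia group of `(q)` is trivial. For a linear group acting on
polynomials an inertial element of `(q)` fixes a hyperplane pointwise, and a symplectic matrix of
finite order which does so is the identity. Equivariance and compatibility with the Poisson bracket
follow from uniqueness, applied to conjugates and to commutators of derivations.
-/

open scoped TensorProduct

section KaehlerAnnihilator

variable {R S : Type*} [CommRing R] [CommRing S] [Algebra R S]

variable {M : Type*} [AddCommGroup M] [Module R M] [Module S M] [IsScalarTower R S M]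

lemma liftBaseChange_derivation_mul (d : Derivation R S M) (x y : S ⊗[R] S) :
    d.toLinearMap.liftBaseChange S (x * y) =
      Algebra.TensorProduct.lmul' R x • d.toLinearMap.liftBaseChange S y +
        Algebra.TensorProduct.lmul' R y • d.toLinearMap.liftBaseChange S x := by
  induction x with
  | zero => simp
  | add x x' hx hx' => simp only [add_mul, map_add, hx, hx', add_smul, smul_add]; abel
  | tmul a b =>
    induction y with
    | zero => simp
    | add y y' hy hy' => simp only [mul_add, map_add, hy, hy', add_smul, smul_add]; abel
    | tmul a' b' =>
      simp only [Algebra.TensorProduct.tmul_mul_tmul, LinearMap.liftBaseChange_tmul,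
        Algebra.TensorProduct.lmul'_apply_tmul, Derivation.coeFn_coe, Derivation.leibniz]
      module

variable {G : Type*} [Group G] [MulSemiringAction G S] [SMulCommClass G R S]

variable (R S) in
/-- The action of a group element on the left factor of `S ⊗[R] S`. -/
noncomputable def leftFactorAction (g : G) : S ⊗[R] S →ₐ[R] S ⊗[R] S :=
  Algebra.TensorProduct.map (MulSemiringAction.toAlgHom R S g) (AlgHom.id R S)

@[simp]
lemma leftFactorAction_tmul (g : G) (a b : S) :
    leftFactorAction R S g (a ⊗ₜ b) = (g • a) ⊗ₜ b := rfl

@[simp]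
lemma leftFactorAction_one (x : S ⊗[R] S) : leftFactorAction R S (1 : G) x = x := by
  induction x with
  | zero => simp
  | add x y hx hy => simp only [map_add, hx, hy]
  | tmul a b => simp

variable [Algebra.IsInvariant R S G]

variable (G) in
lemma sum_liftBaseChange_leftFactorAction [Fintype G] (d : Derivation R S M) (x : S ⊗[R] S) :
    ∑ g : G, d.toLinearMap.liftBaseChange S (leftFactorAction R S g x) =
      d (∑ g : G, Algebra.TensorProduct.lmul' R (leftFactorAction R S g x)) := by
  induction x with
  | zero => simp
  | add x y hx hy => simp only [map_add, Finset.sum_add_distrib] at hx hy ⊢; rw [hx, hy]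
  | tmul a b =>
    obtain ⟨r, hr⟩ : ∃ r, algebraMap R S r = ∑ g : G, g • a :=
      Algebra.IsInvariant.isInvariant (G := G) _ fun h => by
        simp only [Finset.smul_sum, ← mul_smul]
        exact Fintype.sum_equiv (Equiv.mulLeft h) _ _ fun _ => rfl
    calc ∑ g : G, d.toLinearMap.liftBaseChange S (leftFactorAction R S g (a ⊗ₜ b))
        = (∑ g : G, g • a) • d b := by simp [Finset.sum_smul]
      _ = d ((∑ g : G, g • a) * b) := by
        rw [← hr, algebraMap_smul, ← Algebra.smul_def, d.map_smul]
      _ = d (∑ g : G, Algebra.TensorProduct.lmul' R (leftFactorAction R S g (a ⊗ₜ b))) := by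
        simp [Finset.sum_mul]

lemma sq_lmul'_smul_derivation_eq_zero [Finite G] {e : S ⊗[R] S}
    (he : ∀ g : G, g ≠ 1 → Algebra.TensorProduct.lmul' R (leftFactorAction R S g e) = 0)
    (d : Derivation R S M) (f : S) : Algebra.TensorProduct.lmul' R e ^ 2 • d f = 0 := by
  cases nonempty_fintype G
  set μ := Algebra.TensorProduct.lmul' R (S := S)
  set δ := d.toLinearMap.liftBaseChange S with hδ
  have apply_sq_mul (a : S) : a • δ (e ^ 2) = d (a * μ e ^ 2) := by
    have key := sum_liftBaseChange_leftFactorAction G d ((a ⊗ₜ 1) * e ^ 2)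
    have vanish (g : G) (hg : g ≠ 1) :
        δ (leftFactorAction R S g (a ⊗ₜ 1 * e ^ 2)) = 0 ∧
          μ (leftFactorAction R S g (a ⊗ₜ 1 * e ^ 2)) = 0 := by
      simp [hδ, μ, pow_two, liftBaseChange_derivation_mul, he g hg]
    rw [Fintype.sum_eq_single 1 fun g hg => (vanish g hg).1,
      Fintype.sum_eq_single 1 fun g hg => (vanish g hg).2] at key
    simpa [hδ, μ, liftBaseChange_derivation_mul] using key
  have h := apply_sq_mul f
  rw [d.leibniz, ← one_mul (μ e ^ 2), ← apply_sq_mul 1, one_smul] at h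
  simpa using h

variable (R) in
lemma exists_mem_annihilator_kaehlerDifferential [Finite G] {p : Ideal S} [p.IsPrime]
    (hp : p.inertia G = ⊥) : ∃ s ∈ Module.annihilator S Ω[S⁄R], s ∉ p := by
  cases nonempty_fintype G
  classical
  have moved (g : G) (hg : g ≠ 1) : ∃ y : S, y - g • y ∉ p := by
    by_contra! h
    have : g ∈ p.inertia G := fun y => neg_sub y (g • y) ▸ p.neg_mem (h y)
    exact hg (by rwa [hp, Subgroup.mem_bot] at this)
  choose! y hy using moved
  set e : S ⊗[R] S := ∏ g ∈ Finset.univ.erase (1 : G), (y g ⊗ₜ 1 - 1 ⊗ₜ (g • y g)) with he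
  have e_vanishes (g : G) (hg : g ≠ 1) :
      Algebra.TensorProduct.lmul' R (leftFactorAction R S g e) = 0 := by
    rw [he, map_prod, map_prod]
    exact Finset.prod_eq_zero (Finset.mem_erase.2 ⟨hg, Finset.mem_univ g⟩) (by simp)
  refine ⟨Algebra.TensorProduct.lmul' R e ^ 2, ?_, fun h => ?_⟩
  · rw [← Submodule.annihilator_top, ← KaehlerDifferential.span_range_derivation,
      Submodule.mem_annihilator_span]
    rintro ⟨_, f, rfl⟩
    exact sq_lmul'_smul_derivation_eq_zero e_vanishes (KaehlerDifferential.D R S) f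
  · have := Ideal.IsPrime.mem_of_pow_mem ‹_› _ h
    rw [he, map_prod, Ideal.IsPrime.prod_mem_iff] at this
    obtain ⟨g, hg, hmem⟩ := this
    exact hy g (Finset.ne_of_mem_erase hg) (by simpa using hmem)

end KaehlerAnnihilator

section Extension

variable {R S : Type*} [CommRing R] [CommRing S] [Algebra R S]

lemma smul_derivation_mem_of_mem_annihilator {k N : Type*} [CommRing k] [Algebra k S]
    [AddCommGroup N] [Module k N] [Module S N] {P : Submodule S N} {E : Derivation k S N}
    (hE : ∀ r, E (algebraMap R S r) ∈ P) {s : S} (hs : s ∈ Module.annihilator S Ω[S⁄R]) (f : S) :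
    s • E f ∈ P := by
  let : Module R (N ⧸ P) := Module.compHom _ (algebraMap R S)
  have : IsScalarTower R S (N ⧸ P) := .of_algebraMap_smul fun _ _ => rfl
  let E' : Derivation R S (N ⧸ P) := .mk'
    { toFun := fun f => P.mkQ (E f)
      map_add' := by simp
      map_smul' := fun r f => by
        rw [Algebra.smul_def, E.leibniz, map_add, map_smul, map_smul,
          P.mkQ_apply (E (algebraMap R S r)), (Submodule.Quotient.mk_eq_zero P).2 (hE r), smul_zero,
          add_zero, RingHom.id_apply, algebraMap_smul] }
    fun a b => by simp
  have h : s • E' f = 0 := by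
    rw [← E'.liftKaehlerDifferential_comp_D, ← map_smul, Module.mem_annihilator.1 hs, map_zero]
  exact (Submodule.Quotient.mk_eq_zero P).1 h

lemma exists_derivation_extension_of_formallyEtale {k R A M : Type*} [CommRing k] [CommRing R]
    [CommRing A] [Algebra k R] [Algebra k A] [Algebra R A] [IsScalarTower k R A]
    [Algebra.FormallyEtale R A] [AddCommGroup M] [Module k M] [Module R M] [Module A M]
    [IsScalarTower k R M] [IsScalarTower R A M] [IsScalarTower k A M] (d : Derivation k R M) :
    ∃ D : Derivation k A M, ∀ r, D (algebraMap R A r) = d r := by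
  let φ : Ω[A⁄k] →ₗ[A] M := d.liftKaehlerDifferential.liftBaseChange A ∘ₗ
    (KaehlerDifferential.tensorKaehlerEquivOfFormallyEtale k R A).symm
  refine ⟨φ.compDer (KaehlerDifferential.D k A), fun r => ?_⟩
  change d.liftKaehlerDifferential.liftBaseChange A
    ((KaehlerDifferential.tensorKaehlerEquivOfFormallyEtale k R A).symm
      (KaehlerDifferential.D k A (algebraMap R A r))) = _
  rw [KaehlerDifferential.tensorKaehlerEquivOfFormallyEtale_symm_D_algebraMap,
    LinearMap.liftBaseChange_tmul, one_smul, Derivation.liftKaehlerDifferential_comp_D]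

variable (R) in
lemma derivation_ext_of_isGaloisGroup (G : Type*) [Group G] [Finite G] [IsDomain S]
    [MulSemiringAction G S] [IsGaloisGroup G R S] {k M : Type*} [CommRing k] [Algebra k S]
    [AddCommGroup M] [Module k M] [Module S M] [Module.IsTorsionFree S M]
    {D₁ D₂ : Derivation k S M} (h : ∀ r, D₁ (algebraMap R S r) = D₂ (algebraMap R S r)) :
    D₁ = D₂ := by
  have : FaithfulSMul G S := IsGaloisGroup.faithful R
  have : SMulCommClass G R S := IsGaloisGroup.commutes
  have : Algebra.IsInvariant R S G := IsGaloisGroup.isInvariant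
  have inertia_bot : (⊥ : Ideal S).inertia G = ⊥ :=
    (Subgroup.eq_bot_iff_forall _).2 fun g hg => FaithfulSMul.eq_of_smul_eq_smul fun x => by
      rw [one_smul]; exact sub_eq_zero.1 (hg x)
  obtain ⟨s, hs, hs0⟩ := exists_mem_annihilator_kaehlerDifferential R inertia_bot
  ext f
  have := smul_derivation_mem_of_mem_annihilator (P := ⊥) (E := D₁ - D₂)
    (fun r => by simp [h r]) hs f
  simpa [sub_eq_zero, show s ≠ 0 from hs0] using this

lemma mem_range_algebraMap_of_forall_prime {L : Type*} [Field L] [Algebra S L] [IsFractionRing S L]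
    [IsDomain S] [UniqueFactorizationMonoid S] {x : L}
    (hx : ∀ q : S, Prime q → ∃ s, ¬ q ∣ s ∧ s • x ∈ (Algebra.linearMap S L).range) :
    x ∈ (Algebra.linearMap S L).range := by
  obtain ⟨a, b, hab, rfl⟩ := IsFractionRing.exists_reduced_fraction S x
  obtain ⟨c, hc⟩ : ∃ c, c * (b : S) = 1 := by
    refine IsUnit.exists_left_inv (by_contra fun hb => ?_)
    obtain ⟨q, hq, hqb⟩ := WfDvdMonoid.exists_irreducible_factor hb (nonZeroDivisors.coe_ne_zero b)
    obtain ⟨s, hqs, t, ht⟩ := hx q hq.prime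
    have hst : s * a = b * t := by
      apply IsFractionRing.injective S L
      rw [map_mul, map_mul, ← Algebra.linearMap_apply _ _ t, ht, Algebra.smul_def,
        mul_left_comm, IsLocalization.mk'_spec']
    rcases hq.prime.dvd_or_dvd (hst ▸ dvd_mul_of_dvd_left hqb t) with h | h
    · exact hqs h
    · exact hq.not_isUnit (hab h hqb)
  refine ⟨c * a, ?_⟩
  rw [Algebra.linearMap_apply, IsLocalization.eq_mk'_iff_mul_eq, ← map_mul, mul_right_comm, hc,
    one_mul]

lemma exists_compDer_eq_of_forall_mem_range {k M N : Type*} [CommRing k] [Algebra k S]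
    [AddCommGroup M] [Module k M] [Module S M] [IsScalarTower k S M]
    [AddCommGroup N] [Module k N] [Module S N] [IsScalarTower k S N]
    {φ : M →ₗ[S] N} (hφ : Function.Injective φ)
    {E : Derivation k S N} (hE : ∀ f, E f ∈ φ.range) :
    ∃ D : Derivation k S M, φ.compDer D = E := by
  choose D hD using hE
  refine ⟨.mk' { toFun := D, map_add' := fun a b => hφ ?_, map_smul' := fun c a => hφ ?_ }
    fun a b => hφ ?_, Derivation.ext hD⟩
  · simp only [map_add, hD]
  · simp only [RingHom.id_apply, Derivation.map_smul, LinearMap.map_smul_of_tower, hD]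
  · simp [hD]

theorem exists_derivation_extension_of_isGaloisGroup (G : Type*) [Group G] [Finite G]
    [IsDomain S] [UniqueFactorizationMonoid S] [FaithfulSMul R S] [MulSemiringAction G S]
    [IsGaloisGroup G R S] (hinertia : ∀ q : S, Prime q → (Ideal.span {q}).inertia G = ⊥)
    {k : Type*} [CommRing k] [Algebra k R] [Algebra k S] [IsScalarTower k R S]
    (d : Derivation k R S) : ∃ D : Derivation k S S, ∀ r, D (algebraMap R S r) = d r := by
  have : SMulCommClass G R S := IsGaloisGroup.commutes
  have : Algebra.IsInvariant R S G := IsGaloisGroup.isInvariant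
  have : IsDomain R := IsDomain.of_faithfulSMul R S
  let K := FractionRing R
  let L := FractionRing S
  let : Algebra K L := FractionRing.liftAlgebra R L
  let : MulSemiringAction G L := IsFractionRing.mulSemiringAction G S L
  have : IsGaloisGroup G K L := IsGaloisGroup.toFractionRing G R S
  have : IsGalois K L := IsGaloisGroup.isGalois G K L
  have : Algebra.FormallyEtale K L := .of_isSeparable K L
  have : Algebra.FormallyEtale R K := .of_isLocalization (nonZeroDivisors R)
  have : Algebra.FormallyEtale R L := .comp R K L
  obtain ⟨E, hE⟩ := exists_derivation_extension_of_formallyEtale (A := L)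
    ((IsScalarTower.toAlgHom R S L).toLinearMap.compDer d)
  have no_poles (f : S) : E (algebraMap S L f) ∈ (Algebra.linearMap S L).range := by
    refine mem_range_algebraMap_of_forall_prime fun q hq => ?_
    have : (Ideal.span {q}).IsPrime := (Ideal.span_singleton_prime hq.ne_zero).2 hq
    obtain ⟨s, hs, hsq⟩ := exists_mem_annihilator_kaehlerDifferential R (hinertia q hq)
    refine ⟨s, fun h => hsq (Ideal.mem_span_singleton.2 h),
      smul_derivation_mem_of_mem_annihilator (R := R) (E := E.compAlgebraMap S) (fun r => ?_) hs f⟩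
    exact ⟨d r, ((congrArg E (IsScalarTower.algebraMap_apply R S L r).symm).trans (hE r)).symm⟩
  obtain ⟨D, hD⟩ := exists_compDer_eq_of_forall_mem_range (E := E.compAlgebraMap S)
    (IsFractionRing.injective S L) no_poles
  refine ⟨D, fun r => IsFractionRing.injective S L ?_⟩
  calc algebraMap S L (D (algebraMap R S r))
      = E (algebraMap S L (algebraMap R S r)) := DFunLike.congr_fun hD (algebraMap R S r)
    _ = algebraMap S L (d r) := by rw [← IsScalarTower.algebraMap_apply, hE]; rfl

end Extension

section Compatibility

variable {R S : Type*} [CommRing R] [CommRing S] [Algebra R S]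
variable {G : Type*} [Group G] [MulSemiringAction G S] {k : Type*} [CommRing k] [Algebra k S]

/-- The conjugate `f ↦ g⁻¹ • D (g • f)` of a derivation by an automorphism; `D` is equivariant when
it equals all its conjugates. -/
noncomputable def conjDerivation [SMulCommClass G k S] (g : G) (D : Derivation k S S) :
    Derivation k S S :=
  .mk' ((MulSemiringAction.toAlgHom k S g⁻¹).toLinearMap ∘ₗ D.toLinearMap ∘ₗ
    (MulSemiringAction.toAlgHom k S g).toLinearMap) fun a b => by simp

lemma conjDerivation_apply [SMulCommClass G k S] (g : G) (D : Derivation k S S) (f : S) :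
    conjDerivation g D f = g⁻¹ • D (g • f) := rfl

lemma derivation_smul_of_isGaloisGroup [Finite G] [IsDomain S] [IsGaloisGroup G R S]
    [SMulCommClass G k S] {D : Derivation k S S}
    (hD : ∀ r, ∃ r', D (algebraMap R S r) = algebraMap R S r') (g : G) (f : S) :
    D (g • f) = g • D f := by
  have : SMulCommClass G R S := IsGaloisGroup.commutes
  have : conjDerivation g D = D := derivation_ext_of_isGaloisGroup R G fun r => by
    obtain ⟨r', hr'⟩ := hD r
    rw [conjDerivation_apply, smul_algebraMap, hr', smul_algebraMap]
  rw [← inv_smul_eq_iff, ← conjDerivation_apply, this]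

/-- The derivation `f ↦ B f g` obtained from a biderivation `B`, encoded as a derivation with values
in derivations, by freezing its second argument. -/
noncomputable def flipBiderivation (B : Derivation k S (Derivation k S S)) (g : S) :
    Derivation k S S :=
  LinearMap.compDer
    { toFun := fun D => D g, map_add' := fun _ _ => rfl, map_smul' := fun _ _ => rfl } B

lemma flipBiderivation_apply (B : Derivation k S (Derivation k S S)) (g f : S) :
    flipBiderivation B g f = B f g := rfl

variable (R G) in
lemma derivation_map_biderivation_of_isGaloisGroup [Finite G] [IsDomain S] [IsGaloisGroup G R S]
    {D : Derivation k S S} {B : Derivation k S (Derivation k S S)}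
    (h : ∀ r r', D (B (algebraMap R S r) (algebraMap R S r')) =
      B (D (algebraMap R S r)) (algebraMap R S r') + B (algebraMap R S r) (D (algebraMap R S r')))
    (f g : S) : D (B f g) = B (D f) g + B f (D g) := by
  have left_invariant (r : R) (g : S) : D (B (algebraMap R S r) g) =
      B (D (algebraMap R S r)) g + B (algebraMap R S r) (D g) := by
    have : ⁅D, B (algebraMap R S r)⁆ = B (D (algebraMap R S r)) :=
      derivation_ext_of_isGaloisGroup R G fun r' => by
        rw [Derivation.commutator_apply, h, add_sub_cancel_right]
    rw [← this, Derivation.commutator_apply, sub_add_cancel]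
  have : ⁅D, flipBiderivation B g⁆ = flipBiderivation B (D g) :=
    derivation_ext_of_isGaloisGroup R G fun r => by
      rw [Derivation.commutator_apply]
      exact sub_eq_of_eq_add' (left_invariant r g)
  exact eq_add_of_sub_eq' (DFunLike.congr_fun this f)

end Compatibility

section LinearAction

variable {σ K : Type*} [Fintype σ]

lemma bind₁_toMvPolynomial_bind₁ [CommSemiring K] (A B : Matrix σ σ K) (f : MvPolynomial σ K) :
    bind₁ A.toMvPolynomial (bind₁ B.toMvPolynomial f) = bind₁ (B * A).toMvPolynomial f := by
  rw [bind₁_bind₁]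
  exact congrArg (bind₁ · f) (funext fun i => (B.toMvPolynomial_mul A i).symm)

lemma coeff_single_toMvPolynomial [CommSemiring K] (A : Matrix σ σ K) (i j : σ) :
    coeff (Finsupp.single j 1) (A.toMvPolynomial i) = A i j := by
  classical
  simp [Matrix.toMvPolynomial, coeff_sum, coeff_monomial, Finsupp.single_left_inj one_ne_zero]

lemma rank_le_one_of_dvd_toMvPolynomial [Field K] {B : Matrix σ σ K} {q : MvPolynomial σ K}
    (hq : Prime q) (h : ∀ i, q ∣ B.toMvPolynomial i) : B.rank ≤ 1 := by
  have multiple (i : σ) : ∃ a : K, B.toMvPolynomial i = C a * q := by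
    obtain ⟨p, hp⟩ := h i
    rcases eq_or_ne p 0 with rfl | hp0
    · exact ⟨0, by simp [hp]⟩
    have degree_q : q.totalDegree ≠ 0 := fun h0 => by
      have q_eq := totalDegree_eq_zero_iff_eq_C.1 h0
      have : q.coeff 0 ≠ 0 := fun h => hq.ne_zero (by rw [q_eq, h, map_zero])
      exact hq.not_isUnit (isUnit_iff_totalDegree_of_isReduced.2 ⟨this.isUnit, h0⟩)
    have := B.toMvPolynomial_totalDegree_le i
    rw [hp, totalDegree_mul_of_isDomain hq.ne_zero hp0] at this
    refine ⟨p.coeff 0, ?_⟩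
    rw [← totalDegree_eq_zero_iff_eq_C.1 (by lia : p.totalDegree = 0), hp, mul_comm]
  choose a ha using multiple
  have : B = Matrix.vecMulVec a fun j => q.coeff (Finsupp.single j 1) := by
    ext i j
    rw [← coeff_single_toMvPolynomial B, ha, coeff_C_mul, Matrix.vecMulVec_apply]
  exact this ▸ Matrix.rank_vecMulVec_le _ _

lemma derivation_toMvPolynomial [CommSemiring K] {M : Type*} [AddCommMonoid M] [Module K M]
    [Module (MvPolynomial σ K) M] (D : Derivation K (MvPolynomial σ K) M) (A : Matrix σ σ K)
    (i : σ) : D (A.toMvPolynomial i) = ∑ j, A i j • D (X j) := by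
  simp only [Matrix.toMvPolynomial, ← C_mul_X_eq_monomial, ← smul_eq_C_mul, map_sum,
    Derivation.map_smul]

lemma biderivation_toMvPolynomial [CommRing K]
    {B : Derivation K (MvPolynomial σ K) (Derivation K (MvPolynomial σ K) (MvPolynomial σ K))}
    {J : Matrix σ σ K} (hB : ∀ i j, B (X i) (X j) = C (J i j)) (A : Matrix σ σ K) (i j : σ) :
    B (A.toMvPolynomial i) (A.toMvPolynomial j) = C ((A * J * A.transpose) i j) := by
  rw [← flipBiderivation_apply, derivation_toMvPolynomial]
  simp only [flipBiderivation_apply, derivation_toMvPolynomial, hB, smul_eq_C_mul, ← map_mul,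
    ← map_sum, Matrix.mul_apply, Matrix.transpose_apply, Finset.mul_sum, Finset.sum_mul]
  rw [Finset.sum_comm]
  simp only [mul_comm (A j _), mul_assoc]

variable [DecidableEq σ]

/-- The action of linear automorphisms on polynomial functions, `(γ • f) v = f (γ⁻¹ v)`. -/
noncomputable instance generalLinearAction [CommRing K] :
    MulSemiringAction (Matrix.GeneralLinearGroup σ K) (MvPolynomial σ K) where
  smul γ f := bind₁ (γ⁻¹).val.toMvPolynomial f
  one_smul f := by
    change bind₁ (1 : Matrix.GeneralLinearGroup σ K)⁻¹.val.toMvPolynomial f = f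
    rw [inv_one, Units.val_one, Matrix.toMvPolynomial_one, bind₁_X_left, AlgHom.id_apply]
  mul_smul γ δ f := by
    change bind₁ (γ * δ)⁻¹.val.toMvPolynomial f =
      bind₁ (γ⁻¹).val.toMvPolynomial (bind₁ (δ⁻¹).val.toMvPolynomial f)
    rw [bind₁_toMvPolynomial_bind₁, mul_inv_rev, Units.val_mul]
  smul_zero _ := map_zero _
  smul_add _ := map_add _
  smul_one _ := map_one _
  smul_mul _ := map_mul _

lemma generalLinear_smul_def [CommRing K] (γ : Matrix.GeneralLinearGroup σ K)
    (f : MvPolynomial σ K) : γ • f = bind₁ (γ⁻¹).val.toMvPolynomial f := rfl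

lemma generalLinear_inv_smul [CommRing K] (γ : Matrix.GeneralLinearGroup σ K)
    (f : MvPolynomial σ K) : γ⁻¹ • f = bind₁ γ.val.toMvPolynomial f := by
  rw [generalLinear_smul_def, inv_inv]

instance [CommRing K] : SMulCommClass (Matrix.GeneralLinearGroup σ K) K (MvPolynomial σ K) :=
  ⟨fun γ c f => map_smul (bind₁ (γ⁻¹).val.toMvPolynomial) c f⟩

lemma biderivation_smul_smul [CommRing K]
    {B : Derivation K (MvPolynomial σ K) (Derivation K (MvPolynomial σ K) (MvPolynomial σ K))}
    {J : Matrix σ σ K} (hB : ∀ i j, B (X i) (X j) = C (J i j))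
    {γ : Matrix.GeneralLinearGroup σ K} (hγ : (γ⁻¹).val * J * (γ⁻¹).val.transpose = J)
    (f g : MvPolynomial σ K) : B (γ • f) (γ • g) = γ • B f g := by
  have on_X (i j : σ) : B (γ • X i) (γ • X j) = γ • B (X i) (X j) := by
    simp only [generalLinear_smul_def, hB, bind₁_X_right, bind₁_C_right,
      biderivation_toMvPolynomial hB, hγ]
  have on_X_left (i : σ) : conjDerivation γ (B (γ • X i)) = B (X i) :=
    derivation_ext fun j => by rw [conjDerivation_apply, on_X, inv_smul_smul]
  have : conjDerivation γ (flipBiderivation B (γ • g)) = flipBiderivation B g :=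
    derivation_ext fun i => by
      rw [conjDerivation_apply, flipBiderivation_apply, flipBiderivation_apply, ← on_X_left,
        conjDerivation_apply]
  rw [← inv_smul_eq_iff]
  exact DFunLike.congr_fun this f

lemma inertia_span_eq_bot [Field K] {Γ : Subgroup (Matrix.GeneralLinearGroup σ K)}
    (hΓ : ∀ γ ∈ Γ, (γ.val - 1).rank ≤ 1 → γ = 1) {q : MvPolynomial σ K} (hq : Prime q) :
    (Ideal.span {q}).inertia Γ = ⊥ := by
  refine (Subgroup.eq_bot_iff_forall _).2 fun γ hγ => ?_
  refine inv_eq_one.1 <| Subtype.ext <| hΓ _ (γ⁻¹).2 <|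
    rank_le_one_of_dvd_toMvPolynomial hq fun i => ?_
  have toMvPolynomial_sub_one : (γ⁻¹.val.val - 1).toMvPolynomial i = γ • X i - X i := by
    refine eq_sub_of_add_eq ?_
    rw [Subgroup.smul_def, generalLinear_smul_def, bind₁_X_right, ← Matrix.toMvPolynomial_one,
      ← Pi.add_apply, ← Matrix.toMvPolynomial_add, sub_add_cancel, Subgroup.coe_inv]
  exact toMvPolynomial_sub_one ▸ Ideal.mem_span_singleton.1 (hγ (X i))

end LinearAction

section FiniteLinearGroup

variable {σ K : Type*} [Fintype σ] [DecidableEq σ]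

instance [CommRing K] :
    FaithfulSMul (Matrix.GeneralLinearGroup σ K) (MvPolynomial σ K) where
  eq_of_smul_eq_smul h := inv_injective <| Units.ext <| Matrix.ext fun i j => by
    have := congrArg (coeff (Finsupp.single j 1)) (h (X i))
    simpa only [generalLinear_smul_def, bind₁_X_right, coeff_single_toMvPolynomial] using this

lemma isGaloisGroup_of_mem_iff [CommRing K] {Γ : Subgroup (Matrix.GeneralLinearGroup σ K)}
    {R : Subalgebra K (MvPolynomial σ K)}
    (hR : ∀ f, f ∈ R ↔ ∀ γ ∈ Γ, bind₁ γ.val.toMvPolynomial f = f) :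
    IsGaloisGroup Γ R (MvPolynomial σ K) := by
  have mem_iff (f) : f ∈ R ↔ ∀ γ : Γ, γ • f = f := by
    simp only [hR, ← generalLinear_inv_smul, inv_smul_eq_iff, Subtype.forall, Subgroup.mk_smul]
    exact forall₂_congr fun _ _ => eq_comm
  exact {
    faithful := inferInstance
    commutes := ⟨fun γ r f => by
      rw [Subalgebra.smul_def, Subalgebra.smul_def, smul_eq_mul, smul_mul', (mem_iff r).1 r.2 γ,
        smul_eq_mul]⟩
    isInvariant := ⟨fun f hf => ⟨⟨f, (mem_iff f).2 hf⟩, rfl⟩⟩ }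

theorem derivation_of_invariants_extends_general [Field K]
    (Γ : Subgroup (Matrix.GeneralLinearGroup σ K)) [Finite Γ]
    (hΓ : ∀ γ ∈ Γ, (γ.val - 1).rank ≤ 1 → γ = 1) (R : Subalgebra K (MvPolynomial σ K))
    (hR : ∀ f, f ∈ R ↔ ∀ γ ∈ Γ, bind₁ γ.val.toMvPolynomial f = f) (D₀ : Derivation K R R) :
    ∃ D : Derivation K (MvPolynomial σ K) (MvPolynomial σ K),
      (∀ f : R, D f = D₀ f) ∧
      (∀ D' : Derivation K (MvPolynomial σ K) (MvPolynomial σ K),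
        (∀ f : R, D' f = D₀ f) → D' = D) ∧
      (∀ γ ∈ Γ, ∀ f, D (bind₁ γ.val.toMvPolynomial f) = bind₁ γ.val.toMvPolynomial (D f)) ∧
      ∀ B : Derivation K (MvPolynomial σ K) (Derivation K (MvPolynomial σ K) (MvPolynomial σ K)),
        (∀ γ ∈ Γ, ∀ f g, B (bind₁ γ.val.toMvPolynomial f) (bind₁ γ.val.toMvPolynomial g) =
          bind₁ γ.val.toMvPolynomial (B f g)) →
        (∀ f g b : R, (b : MvPolynomial σ K) = B f g →
          (D₀ b : MvPolynomial σ K) = B (D₀ f) g + B f (D₀ g)) →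
        ∀ f g, D (B f g) = B (D f) g + B f (D g) := by
  have := isGaloisGroup_of_mem_iff hR
  obtain ⟨D, hD⟩ := exists_derivation_extension_of_isGaloisGroup (R := R) Γ
    (fun q hq => inertia_span_eq_bot hΓ hq) ((Algebra.linearMap R (MvPolynomial σ K)).compDer D₀)
  replace hD (f : R) : D f = D₀ f := hD f
  refine ⟨D, hD, fun D' hD' => derivation_ext_of_isGaloisGroup R Γ fun r =>
    (hD' r).trans (hD r).symm, fun γ hγ f => ?_, fun B hB hD₀ =>
    derivation_map_biderivation_of_isGaloisGroup R Γ fun r r' => ?_⟩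
  · simp only [← generalLinear_inv_smul]
    exact derivation_smul_of_isGaloisGroup (R := R) (fun r => ⟨D₀ r, hD r⟩) (⟨γ, hγ⟩⁻¹ : Γ) f
  · have mem : B r r' ∈ R := (hR _).2 fun γ hγ => by
      rw [← hB γ hγ, (hR r).1 r.2 γ hγ, (hR r').1 r'.2 γ hγ]
    change D (B r r') = B (D r) r' + B r (D r')
    rw [hD r, hD r', ← hD₀ r r' ⟨_, mem⟩ rfl]
    exact hD ⟨_, mem⟩

end FiniteLinearGroup

section SymplecticReflections

lemma exists_eq_vecMulVec_of_rank_le_one {m n K : Type*} [Fintype n] [Field K]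
    {A : Matrix m n K} (hA : A.rank ≤ 1) : ∃ u v, A = Matrix.vecMulVec u v := by
  classical
  obtain ⟨⟨u, _⟩, hu⟩ := finrank_le_one_iff.1 hA
  have column (j : n) : ∃ c : K, c • u = A.col j := by
    obtain ⟨c, hc⟩ := hu ⟨A.mulVecLin (Pi.single j 1), LinearMap.mem_range_self _ _⟩
    exact ⟨c, by simpa using congrArg Subtype.val hc⟩
  choose v hv using column
  refine ⟨u, v, Matrix.ext fun i j => ?_⟩
  rw [Matrix.vecMulVec_apply, mul_comm]
  exact (congrFun (hv j) i).symm

lemma eq_one_of_rank_sub_one_le_one {σ K : Type*} [Fintype σ] [DecidableEq σ] [Field K]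
    [CharZero K] {A : Matrix σ σ K} (hdet : A.det = 1) (hA : IsOfFinOrder A)
    (hrank : (A - 1).rank ≤ 1) : A = 1 := by
  obtain ⟨u, v, huv⟩ := exists_eq_vecMulVec_of_rank_le_one hrank
  have orthogonal : v ⬝ᵥ u = 0 := by
    rw [eq_add_of_sub_eq' huv, Matrix.vecMulVec_eq Unit,
      Matrix.det_one_add_replicateCol_mul_replicateRow] at hdet
    simpa using hdet
  have sq_zero : (A - 1) * (A - 1) = 0 := by
    rw [huv, Matrix.vecMulVec_mul_vecMulVec, orthogonal, zero_smul, Matrix.vecMulVec_zero]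
  have pow_eq (k : ℕ) : A ^ k = 1 + (k : K) • (A - 1) := by
    induction k with
    | zero => simp
    | succ k ih =>
      calc A ^ (k + 1) = A ^ k * (A - 1) + A ^ k := by
            rw [pow_succ, mul_sub, mul_one, sub_add_cancel]
        _ = (A - 1) + (1 + (k : K) • (A - 1)) := by
          rw [ih, add_mul, one_mul, smul_mul_assoc, sq_zero, smul_zero, add_zero]
        _ = 1 + ((k + 1 : ℕ) : K) • (A - 1) := by push_cast; module
  obtain ⟨k, hk, hAk⟩ := isOfFinOrder_iff_pow_eq_one.1 hA
  rw [pow_eq, add_eq_left, smul_eq_zero] at hAk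
  exact sub_eq_zero.1 (hAk.resolve_left (Nat.cast_ne_zero.2 hk.ne'))

lemma eq_one_of_mem_symplecticGroup_of_rank_sub_one_le_one {l K : Type*} [Fintype l]
    [DecidableEq l] [Field K] [CharZero K] {γ : Matrix.GeneralLinearGroup (l ⊕ l) K}
    (hsp : γ.val ∈ Matrix.symplecticGroup l K) (hγ : IsOfFinOrder γ)
    (hrank : (γ.val - 1).rank ≤ 1) : γ = 1 :=
  Units.ext <| eq_one_of_rank_sub_one_le_one (SymplecticGroup.det_eq_one hsp)
    (Units.isOfFinOrder_val.2 hγ) hrank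

end SymplecticReflections

section PoissonBracket

variable {n : ℕ}

lemma substG_eq_bind₁ (A : Mn n) : substG n A = bind₁ A.toMvPolynomial := by
  refine algHom_ext fun i => ?_
  rw [substG, aeval_X, bind₁_X_right, Matrix.toMvPolynomial]
  simp only [← C_mul_X_eq_monomial, smul_eq_C_mul]

lemma mem_invariants_iff {Γ : Subgroup (GLn n)} {f : Pn n} :
    f ∈ invariants n Γ ↔ ∀ γ ∈ Γ, bind₁ γ.val.toMvPolynomial f = f := by
  simp only [← substG_eq_bind₁]; rfl

variable (n) in
/-- The standard Poisson bracket as a biderivation. -/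
noncomputable def poissonBiderivation : Derivation ℂ (Pn n) (Derivation ℂ (Pn n) (Pn n)) :=
  ∑ i : Fin n,
    ((LinearMap.toSpanSingleton (Pn n) _ (pderiv (Sum.inr i))).compDer (pderiv (Sum.inl i)) -
      (LinearMap.toSpanSingleton (Pn n) _ (pderiv (Sum.inl i))).compDer (pderiv (Sum.inr i)))

lemma derivation_sum_apply {k S M ι : Type*} [CommRing k] [CommRing S] [Algebra k S]
    [AddCommGroup M] [Module k M] [Module S M] (s : Finset ι) (D : ι → Derivation k S M) (f : S) :
    (∑ i ∈ s, D i) f = ∑ i ∈ s, D i f := by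
  rw [← Derivation.coeFnAddMonoidHom_apply, map_sum, Finset.sum_apply]
  rfl

lemma poissonBiderivation_apply (f g : Pn n) :
    poissonBiderivation n f g = pbracket n f g := by
  rw [poissonBiderivation, derivation_sum_apply, derivation_sum_apply]
  rfl

lemma poissonBiderivation_X_X (i j : Fin n ⊕ Fin n) :
    poissonBiderivation n (X i) (X j) = C ((-Matrix.J (Fin n) ℂ) i j) := by
  rw [poissonBiderivation_apply]
  rcases i with i | i <;> rcases j with j | j <;>
    simp [pbracket, Matrix.J, pderiv_X, Matrix.one_apply, Pi.single_apply]

lemma poissonBiderivation_bind₁ {γ : GLn n} (hγ : γ.val ∈ Matrix.symplecticGroup (Fin n) ℂ)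
    (f g : Pn n) :
    poissonBiderivation n (bind₁ γ.val.toMvPolynomial f) (bind₁ γ.val.toMvPolynomial g) =
      bind₁ γ.val.toMvPolynomial (poissonBiderivation n f g) := by
  simp only [← generalLinear_inv_smul]
  refine biderivation_smul_smul poissonBiderivation_X_X ?_ f g
  rw [inv_inv, mul_neg, neg_mul, SymplecticGroup.mem_iff.1 hγ]

end PoissonBracket

/-- for a finite subgroup `Γ ⊆ Sp(V)` of a complex symplectic vector space `V`,
every derivation `D₀` of `ℂ[V]^Γ` is the restriction of a unique `Γ`-equivariant derivation
`D` of `ℂ[V]`; moreover, if `D₀` is a Poisson derivation for the restricted bracket,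
then `D` is a Poisson derivation of `ℂ[V]`. -/
theorem derivation_of_invariants_extends
    (n : ℕ) (Γ : Subgroup (GLn n)) (hfin : Finite Γ)
    (hsp : ∀ γ ∈ Γ, ((γ : GLn n) : Mn n) ∈ Matrix.symplecticGroup (Fin n) ℂ)
    (D₀ : Derivation ℂ (invariants n Γ) (invariants n Γ)) :
    ∃ D : Derivation ℂ (Pn n) (Pn n),
      -- `D` is `Γ`-equivariant
      ((∀ γ ∈ Γ, ∀ f : Pn n,
          D (substG n ((γ : GLn n) : Mn n) f) = substG n ((γ : GLn n) : Mn n) (D f)) ∧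
        -- `D` preserves the invariants and restricts to `D₀` there
        (∀ f : invariants n Γ, D (f : Pn n) = ((D₀ f : invariants n Γ) : Pn n))) ∧
      -- uniqueness of such an extension
      (∀ D' : Derivation ℂ (Pn n) (Pn n),
        ((∀ γ ∈ Γ, ∀ f : Pn n,
            D' (substG n ((γ : GLn n) : Mn n) f) = substG n ((γ : GLn n) : Mn n) (D' f)) ∧
          (∀ f : invariants n Γ, D' (f : Pn n) = ((D₀ f : invariants n Γ) : Pn n))) →
        D' = D) ∧
      -- if `D₀` is Poisson then so is `D`
      ((∀ f g b : invariants n Γ, (b : Pn n) = pbracket n (f : Pn n) (g : Pn n) →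
          ((D₀ b : invariants n Γ) : Pn n)
            = pbracket n ((D₀ f : invariants n Γ) : Pn n) (g : Pn n)
              + pbracket n (f : Pn n) ((D₀ g : invariants n Γ) : Pn n)) →
        ∀ f g : Pn n, D (pbracket n f g) = pbracket n (D f) g + pbracket n f (D g)) := by
  simp only [substG_eq_bind₁, ← poissonBiderivation_apply]
  obtain ⟨D, extends_D₀, unique, equivariant, poisson⟩ := derivation_of_invariants_extends_general Γ
    (fun γ hγ => eq_one_of_mem_symplecticGroup_of_rank_sub_one_le_one (hsp γ hγ)
      (Submonoid.isOfFinOrder_coe.2 (isOfFinOrder_of_finite (⟨γ, hγ⟩ : Γ))))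
    (invariants n Γ) (fun _ => mem_invariants_iff) D₀
  exact ⟨D, ⟨equivariant, extends_D₀⟩, fun D' hD' => unique D' hD'.2,
    poisson _ fun γ hγ => poissonBiderivation_bind₁ (hsp γ hγ)⟩
end

section
/- Let E be a finite-dimensional real inner product space and Φ ⊆ E ∖ {0} a finite set such that for every α ∈ Φ the orthogonal reflection s_α fixing the hyperplane α^⊥ maps Φ to itself; let W ⊆ O(E) be the (finite) subgroup generated by the reflections s_α, α ∈ Φ. Let Φ⁺ ⊆ Φ be a positive system (i.e., Φ⁺ = {α ∈ Φ : ⟨α, v₀⟩ > 0} for some v₀ ∈ E with ⟨α, v₀⟩ ≠ 0 for all α ∈ Φ), and let Ξ ⊆ O(E) be a subgroup with Ξ(Φ⁺) = Φ⁺. If λ, λ' ∈ E are fixed by every element of Ξ and λ' = wλ for some w ∈ W, then there exists w₀ ∈ W commuting with every element of Ξ such that λ' = w₀λ. -/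
open scoped RealInnerProductSpace

/-- The orthogonal reflection in the hyperplane `α^⊥` of a real inner product space. -/
noncomputable def orthoReflection {E : Type*} [NormedAddCommGroup E] [InnerProductSpace ℝ E]
    (α : E) (x : E) : E :=
  x - (2 * ⟪x, α⟫ / ⟪α, α⟫) • α

/-!
Refine `v₀` by `λ`: for small `ε > 0` the vector `λ + ε v₀` is regular, and its positive roots are
those which are lexicographically positive for `(λ, v₀)`.  Among the elements of the finite group
`W` taking `λ` to `λ'`, one maximizing `⟪g v₀, v₀⟫` takes the positive system of `(λ, v₀)` to that
of `(λ', v₀)`.  An element of `W` is determined by its effect on a single positive system, and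
every `ξ ∈ Ξ` preserves both systems; hence `ξ g ξ⁻¹ = g`.

That `W` acts freely on positive systems follows from the exchange property of words in simple
reflections.  Here a positive root is called simple when its reflection makes no positive root
negative, except the multiples of the root itself.  Simple reflections generate `W`: if `β` is not
simple then `s_β = s_α s_γ s_α` with `γ = s_α β`, where `α` and `γ` make smaller angles with the
hyperplane `v₀^⊥` than `β` does.
-/

section ReflectionPositiveSystems

variable {E : Type*} [NormedAddCommGroup E] [InnerProductSpace ℝ E]

/-- The orthogonal reflection `s_α` as an element of the general linear group of `E`; it is the
identity when `α = 0`. -/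
noncomputable def orthoReflectionEquiv (α : E) : E ≃ₗ[ℝ] E :=
  ((ℝ ∙ α)ᗮ.reflection).toLinearEquiv

@[simp]
lemma orthoReflectionEquiv_apply (α x : E) : orthoReflectionEquiv α x = orthoReflection α x := by
  simp only [orthoReflectionEquiv, orthoReflection, LinearIsometryEquiv.coe_toLinearEquiv,
    Submodule.reflection_orthogonal_apply, Submodule.reflection_singleton_apply,
    real_inner_self_eq_norm_sq, real_inner_comm, RCLike.ofReal_real_eq_id, id_eq]
  module

lemma inner_orthoReflection_orthoReflection (α x y : E) :
    ⟪orthoReflection α x, orthoReflection α y⟫ = ⟪x, y⟫ := by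
  simp_rw [← orthoReflectionEquiv_apply]
  exact (ℝ ∙ α)ᗮ.reflection.inner_map_map x y

lemma norm_orthoReflection (α x : E) : ‖orthoReflection α x‖ = ‖x‖ := by
  rw [← orthoReflectionEquiv_apply]
  exact (ℝ ∙ α)ᗮ.reflection.norm_map x

@[simp]
lemma orthoReflection_self (α : E) : orthoReflection α α = -α := by
  rw [← orthoReflectionEquiv_apply]
  exact Submodule.reflection_orthogonalComplement_singleton_eq_neg α

lemma inner_orthoReflection_left (α x v : E) :
    ⟪orthoReflection α x, v⟫ = ⟪x, v⟫ - 2 * (⟪x, α⟫ * ⟪α, v⟫ / ‖α‖ ^ 2) := by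
  rw [orthoReflection, inner_sub_left, real_inner_smul_left, real_inner_self_eq_norm_sq]
  ring

@[simp]
lemma orthoReflection_neg (α x : E) : orthoReflection α (-x) = -orthoReflection α x := by
  simp_rw [← orthoReflectionEquiv_apply, map_neg]

@[simp]
lemma orthoReflection_orthoReflection (α x : E) :
    orthoReflection α (orthoReflection α x) = x := by
  simp_rw [← orthoReflectionEquiv_apply]
  exact (ℝ ∙ α)ᗮ.reflection_reflection x

@[simp]
lemma orthoReflectionEquiv_mul_self (α : E) :
    orthoReflectionEquiv α * orthoReflectionEquiv α = 1 :=
  LinearEquiv.ext fun x ↦ by simp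

@[simp]
lemma orthoReflectionEquiv_inv (α : E) : (orthoReflectionEquiv α)⁻¹ = orthoReflectionEquiv α :=
  inv_eq_of_mul_eq_one_left (orthoReflectionEquiv_mul_self α)

lemma orthoReflectionEquiv_eq_of_mem_span {α β : E} (hβ : β ≠ 0) (h : β ∈ ℝ ∙ α) :
    orthoReflectionEquiv β = orthoReflectionEquiv α := by
  obtain ⟨t, rfl⟩ := Submodule.mem_span_singleton.1 h
  simp only [orthoReflectionEquiv,
    Submodule.span_singleton_smul_eq (left_ne_zero_of_smul hβ).isUnit]

lemma orthoReflectionEquiv_neg (α : E) :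
    orthoReflectionEquiv (-α) = orthoReflectionEquiv α := by
  simp only [orthoReflectionEquiv, ← neg_one_smul ℝ α,
    Submodule.span_singleton_smul_eq isUnit_one.neg]

lemma orthoReflectionEquiv_map_mul {g : E ≃ₗ[ℝ] E} (hg : ∀ x y, ⟪g x, g y⟫ = ⟪x, y⟫) (α : E) :
    orthoReflectionEquiv (g α) * g = g * orthoReflectionEquiv α := by
  ext x
  simp only [LinearEquiv.mul_apply, orthoReflectionEquiv_apply, orthoReflection, hg, map_sub,
    map_smul]

lemma orthoReflectionEquiv_orthoReflection (α β : E) :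
    orthoReflectionEquiv (orthoReflection α β) =
      orthoReflectionEquiv α * orthoReflectionEquiv β * orthoReflectionEquiv α := by
  have hconj := orthoReflectionEquiv_map_mul (g := orthoReflectionEquiv α)
    (by simpa using inner_orthoReflection_orthoReflection α) β
  rw [← hconj, orthoReflectionEquiv_apply, mul_assoc, orthoReflectionEquiv_mul_self, mul_one]

/-- Stability of a set `Φ` under the reflections in its own elements: the condition on a root
system, without crystallographic or reducedness assumptions. -/
def IsReflectionStable (Φ : Set E) : Prop :=
  ∀ α ∈ Φ, ∀ β ∈ Φ, orthoReflection α β ∈ Φ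

/-- The group `W` generated by the reflections `s_α`, `α ∈ Φ`. -/
def reflectionGroup (Φ : Set E) : Subgroup (E ≃ₗ[ℝ] E) :=
  Subgroup.closure (orthoReflectionEquiv '' Φ)

/-- A vector lying on none of the hyperplanes `α^⊥`, `α ∈ Φ`. -/
def IsRegularVector (Φ : Set E) (v : E) : Prop :=
  ∀ α ∈ Φ, ⟪α, v⟫ ≠ 0

/-- The roots on the positive side of `v^⊥`; they form a positive system when `v` is regular. -/
def positiveRoots (Φ : Set E) (v : E) : Set E :=
  {α ∈ Φ | 0 < ⟪α, v⟫}

/-- A simple root, characterized by its reflection: the only positive roots it may make negative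
are the multiples of the root itself.  `Φ` may contain several multiples of a simple root. -/
def IsSimpleRoot (Φ : Set E) (v γ : E) : Prop :=
  γ ∈ positiveRoots Φ v ∧
    ∀ β ∈ positiveRoots Φ v, β ∈ ℝ ∙ γ ∨ orthoReflection γ β ∈ positiveRoots Φ v

/-- The reflections in the simple roots. -/
def simpleReflections (Φ : Set E) (v : E) : Set (E ≃ₗ[ℝ] E) :=
  orthoReflectionEquiv '' {γ | IsSimpleRoot Φ v γ}

/-- The roots that are positive for the lexicographic order given by the functionals `⟪·, x⟫` and
`⟪·, v⟫`. -/
def lexPositiveRoots (Φ : Set E) (x v : E) : Set E :=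
  {α ∈ Φ | 0 < ⟪α, x⟫ ∨ ⟪α, x⟫ = 0 ∧ 0 < ⟪α, v⟫}

variable {Φ : Set E} {v : E}

lemma IsReflectionStable.neg_mem (hΦ : IsReflectionStable Φ) {α : E} (hα : α ∈ Φ) : -α ∈ Φ :=
  orthoReflection_self α ▸ hΦ α hα α hα

lemma closure_orthoReflection_eq_reflectionGroup (Φ : Set E) :
    Subgroup.closure {w : E ≃ₗ[ℝ] E | ∃ α ∈ Φ, ∀ x : E, w x = orthoReflection α x} =
      reflectionGroup Φ := by
  rw [reflectionGroup]
  congr 1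
  ext w
  simp [LinearEquiv.ext_iff, eq_comm]

lemma orthoReflectionEquiv_mem_reflectionGroup {α : E} (hα : α ∈ Φ) :
    orthoReflectionEquiv α ∈ reflectionGroup Φ :=
  Subgroup.subset_closure ⟨α, hα, rfl⟩

lemma inner_map_map_of_mem_reflectionGroup {w : E ≃ₗ[ℝ] E} (hw : w ∈ reflectionGroup Φ)
    (x y : E) : ⟪w x, w y⟫ = ⟪x, y⟫ := by
  induction hw using Subgroup.closure_induction'' generalizing x y with
  | mem w hw | inv_mem w hw =>
    obtain ⟨α, -, rfl⟩ := hw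
    simp [inner_orthoReflection_orthoReflection]
  | one => rfl
  | mul _ _ _ _ ihg ihh => exact (ihg _ _).trans (ihh _ _)

lemma map_mem_of_mem_reflectionGroup (hΦ : IsReflectionStable Φ) {w : E ≃ₗ[ℝ] E}
    (hw : w ∈ reflectionGroup Φ) {α : E} (hα : α ∈ Φ) : w α ∈ Φ := by
  induction hw using Subgroup.closure_induction'' generalizing α with
  | mem w hw | inv_mem w hw =>
    obtain ⟨β, hβ, rfl⟩ := hw
    simpa using hΦ β hβ α hα
  | one => exact hα
  | mul _ _ _ _ ihg ihh => exact ihg (ihh hα)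

lemma conj_mem_reflectionGroup {g w : E ≃ₗ[ℝ] E} (hg : ∀ x y, ⟪g x, g y⟫ = ⟪x, y⟫)
    (hgΦ : Set.MapsTo g Φ Φ) (hw : w ∈ reflectionGroup Φ) : g * w * g⁻¹ ∈ reflectionGroup Φ := by
  suffices reflectionGroup Φ ≤ (reflectionGroup Φ).comap (MulAut.conj g).toMonoidHom from this hw
  refine (Subgroup.closure_le _).2 ?_
  rintro _ ⟨α, hα, rfl⟩
  have hconj : g * orthoReflectionEquiv α * g⁻¹ = orthoReflectionEquiv (g α) := by
    rw [← orthoReflectionEquiv_map_mul hg, mul_inv_cancel_right]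
  change g * orthoReflectionEquiv α * g⁻¹ ∈ reflectionGroup Φ
  exact hconj ▸ orthoReflectionEquiv_mem_reflectionGroup (hgΦ hα)

lemma mem_or_neg_mem_positiveRoots (hΦ : IsReflectionStable Φ) (hv : IsRegularVector Φ v) {α : E}
    (hα : α ∈ Φ) : α ∈ positiveRoots Φ v ∨ -α ∈ positiveRoots Φ v := by
  rcases (hv α hα).lt_or_gt with hneg | hpos
  · exact .inr ⟨hΦ.neg_mem hα, by rwa [inner_neg_left, neg_pos]⟩
  · exact .inl ⟨hα, hpos⟩

lemma neg_notMem_positiveRoots {α : E} (hα : α ∈ positiveRoots Φ v) :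
    -α ∉ positiveRoots Φ v := fun h ↦ by
  have hneg := h.2
  rw [inner_neg_left] at hneg
  linarith [hα.2]

lemma ne_zero_of_mem_positiveRoots {α : E} (hα : α ∈ positiveRoots Φ v) : α ≠ 0 := by
  rintro rfl
  simpa using hα.2

lemma mapsTo_of_mapsTo_positiveRoots (hΦ : IsReflectionStable Φ) (hv : IsRegularVector Φ v)
    {g : E ≃ₗ[ℝ] E} (hg : Set.MapsTo g (positiveRoots Φ v) (positiveRoots Φ v)) :
    Set.MapsTo g Φ Φ := fun α hα ↦ by
  rcases mem_or_neg_mem_positiveRoots hΦ hv hα with hpos | hneg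
  · exact (hg hpos).1
  · simpa using hΦ.neg_mem (hg hneg).1

/-! ### Simple reflections generate -/

lemma inner_div_norm_lt_of_inner_mul_norm_sq_le {α β : E} (hα : α ≠ 0) (hβ : 0 < ⟪β, v⟫)
    (hαβ : α ∉ ℝ ∙ β) (hle : ⟪α, v⟫ * ‖β‖ ^ 2 ≤ ⟪α, β⟫ * ⟪β, v⟫) :
    ⟪α, v⟫ / ‖α‖ < ⟪β, v⟫ / ‖β‖ := by
  have hβ0 : 0 < ‖β‖ := norm_pos_iff.2 fun h ↦ by simp [h] at hβ
  have hcs : ⟪α, β⟫ < ‖α‖ * ‖β‖ := by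
    refine inner_lt_norm_mul_iff_real.2 fun h ↦ hαβ ?_
    rw [← Submodule.smul_mem_iff _ hβ0.ne', h]
    exact Submodule.smul_mem _ _ (Submodule.mem_span_singleton_self β)
  rw [div_lt_div_iff₀ (norm_pos_iff.2 hα) hβ0]
  refine lt_of_mul_lt_mul_right (a := ‖β‖) ?_ hβ0.le
  calc ⟪α, v⟫ * ‖β‖ * ‖β‖ = ⟪α, v⟫ * ‖β‖ ^ 2 := by ring
    _ ≤ ⟪α, β⟫ * ⟪β, v⟫ := hle
    _ < ‖α‖ * ‖β‖ * ⟪β, v⟫ := by gcongr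
    _ = ⟪β, v⟫ * ‖α‖ * ‖β‖ := by ring

lemma abs_inner_orthoReflection_lt {α β : E} (hα : 0 < ⟪α, v⟫) (hαβ : 0 < ⟪α, β⟫)
    (hlt : ⟪α, v⟫ / ‖α‖ < ⟪β, v⟫ / ‖β‖) : |⟪orthoReflection α β, v⟫| < ⟪β, v⟫ := by
  have hα0 : 0 < ‖α‖ := norm_pos_iff.2 fun h ↦ by simp [h] at hα
  have hβ0 : 0 < ‖β‖ := norm_pos_iff.2 fun h ↦ by simp [h] at hαβ
  rw [div_lt_div_iff₀ hα0 hβ0] at hlt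
  have hbound : ⟪α, β⟫ * ⟪α, v⟫ < ⟪β, v⟫ * ‖α‖ ^ 2 :=
    calc ⟪α, β⟫ * ⟪α, v⟫ ≤ ‖α‖ * ‖β‖ * ⟪α, v⟫ := by gcongr; exact real_inner_le_norm α β
      _ = ‖α‖ * (⟪α, v⟫ * ‖β‖) := by ring
      _ < ‖α‖ * (⟪β, v⟫ * ‖α‖) := by gcongr
      _ = ⟪β, v⟫ * ‖α‖ ^ 2 := by ring
  have hdiv : ⟪α, β⟫ * ⟪α, v⟫ / ‖α‖ ^ 2 < ⟪β, v⟫ := (div_lt_iff₀ (by positivity)).2 hbound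
  have hdiv_pos : 0 < ⟪α, β⟫ * ⟪α, v⟫ / ‖α‖ ^ 2 := by positivity
  rw [inner_orthoReflection_left, real_inner_comm α β, abs_lt]
  constructor <;> linarith

/- The hypothesis says that `α` is the lower of the two roots `α` and `-s_β α`, whose sum is a
multiple of `β`. -/
lemma inner_div_norm_lt_of_inner_le_neg_inner_orthoReflection {α β : E} (hα : 0 < ⟪α, v⟫)
    (hβ : 0 < ⟪β, v⟫) (hαβ : α ∉ ℝ ∙ β) (hle : ⟪α, v⟫ ≤ -⟪orthoReflection β α, v⟫) :
    ⟪α, v⟫ / ‖α‖ < ⟪β, v⟫ / ‖β‖ ∧ |⟪orthoReflection α β, v⟫| < ⟪β, v⟫ := by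
  have hα0 : α ≠ 0 := fun h ↦ by simp [h] at hα
  have hβ0 : 0 < ‖β‖ := norm_pos_iff.2 fun h ↦ by simp [h] at hβ
  have hsum : ⟪α, v⟫ * ‖β‖ ^ 2 ≤ ⟪α, β⟫ * ⟪β, v⟫ := by
    rw [inner_orthoReflection_left] at hle
    rw [← le_div_iff₀ (by positivity)]
    linarith
  have hpos : 0 < ⟪α, β⟫ :=
    pos_of_mul_pos_left ((by positivity : 0 < ⟪α, v⟫ * ‖β‖ ^ 2).trans_le hsum) hβ.le
  have hlt := inner_div_norm_lt_of_inner_mul_norm_sq_le hα0 hβ hαβ hsum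
  exact ⟨hlt, abs_inner_orthoReflection_lt hα hpos hlt⟩

lemma exists_inner_div_norm_lt_of_not_isSimpleRoot (hΦ : IsReflectionStable Φ)
    (hv : IsRegularVector Φ v) {β : E} (hβ : β ∈ positiveRoots Φ v)
    (hβs : ¬IsSimpleRoot Φ v β) :
    ∃ α ∈ positiveRoots Φ v,
      ⟪α, v⟫ / ‖α‖ < ⟪β, v⟫ / ‖β‖ ∧ |⟪orthoReflection α β, v⟫| < ⟪β, v⟫ := by
  simp only [IsSimpleRoot, hβ, true_and, not_forall, not_or] at hβs
  obtain ⟨α, hα, hspan, hneg⟩ := hβs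
  have hγ : -orthoReflection β α ∈ positiveRoots Φ v :=
    (mem_or_neg_mem_positiveRoots hΦ hv (hΦ β hβ.1 α hα.1)).resolve_left hneg
  rcases le_total ⟪α, v⟫ ⟪-orthoReflection β α, v⟫ with hle | hle
  · exact ⟨α, hα, inner_div_norm_lt_of_inner_le_neg_inner_orthoReflection hα.2 hβ.2 hspan
      (by rwa [inner_neg_left] at hle)⟩
  · refine ⟨_, hγ, inner_div_norm_lt_of_inner_le_neg_inner_orthoReflection hγ.2 hβ.2 ?_ ?_⟩
    · rw [neg_mem_iff, orthoReflection,
        Submodule.sub_mem_iff_left _ (Submodule.smul_mem _ _ (Submodule.mem_span_singleton_self β))]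
      exact hspan
    · simpa using hle

lemma orthoReflectionEquiv_mem_closure_simpleReflections (hΦfin : Φ.Finite)
    (hΦ : IsReflectionStable Φ) (hv : IsRegularVector Φ v) {β : E} (hβ : β ∈ positiveRoots Φ v) :
    orthoReflectionEquiv β ∈ Subgroup.closure (simpleReflections Φ v) := by
  set H := Subgroup.closure (simpleReflections Φ v)
  by_contra hβH
  obtain ⟨δ, ⟨hδ, hδH⟩, hmin⟩ := Set.exists_min_image
    {δ ∈ positiveRoots Φ v | orthoReflectionEquiv δ ∉ H} (fun δ ↦ ⟪δ, v⟫ / ‖δ‖)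
    (hΦfin.subset fun δ hδ ↦ hδ.1.1) ⟨β, hβ, hβH⟩
  have hlower : ∀ α ∈ positiveRoots Φ v, ⟪α, v⟫ / ‖α‖ < ⟪δ, v⟫ / ‖δ‖ →
      orthoReflectionEquiv α ∈ H := fun α hα hlt ↦ by
    by_contra hαH
    exact (hmin α ⟨hα, hαH⟩).not_gt hlt
  have hδs : ¬IsSimpleRoot Φ v δ := fun hs ↦ hδH (Subgroup.subset_closure ⟨δ, hs, rfl⟩)
  obtain ⟨α, hα, hαδ, habs⟩ := exists_inner_div_norm_lt_of_not_isSimpleRoot hΦ hv hδ hδs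
  have hαH := hlower α hα hαδ
  have hγH : orthoReflectionEquiv (orthoReflection α δ) ∈ H := by
    have hδ0 : 0 < ‖δ‖ := norm_pos_iff.2 (ne_zero_of_mem_positiveRoots hδ)
    rcases mem_or_neg_mem_positiveRoots hΦ hv (hΦ α hα.1 δ hδ.1) with hpos | hneg
    · refine hlower _ hpos ?_
      rw [norm_orthoReflection]
      gcongr
      exact (abs_lt.1 habs).2
    · rw [← orthoReflectionEquiv_neg]
      refine hlower _ hneg ?_
      rw [norm_neg, norm_orthoReflection, inner_neg_left]
      gcongr
      exact neg_lt.1 (abs_lt.1 habs).1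
  have hδ_eq : orthoReflectionEquiv δ = orthoReflectionEquiv α *
      orthoReflectionEquiv (orthoReflection α δ) * orthoReflectionEquiv α := by
    rw [← orthoReflectionEquiv_orthoReflection, orthoReflection_orthoReflection]
  exact hδH (hδ_eq ▸ H.mul_mem (H.mul_mem hαH hγH) hαH)

lemma reflectionGroup_le_closure_simpleReflections (hΦfin : Φ.Finite) (hΦ : IsReflectionStable Φ)
    (hv : IsRegularVector Φ v) :
    reflectionGroup Φ ≤ Subgroup.closure (simpleReflections Φ v) := by
  refine (Subgroup.closure_le _).2 ?_
  rintro _ ⟨β, hβ, rfl⟩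
  rcases mem_or_neg_mem_positiveRoots hΦ hv hβ with hpos | hneg
  · exact orthoReflectionEquiv_mem_closure_simpleReflections hΦfin hΦ hv hpos
  · exact orthoReflectionEquiv_neg β ▸
      orthoReflectionEquiv_mem_closure_simpleReflections hΦfin hΦ hv hneg

lemma exists_list_prod_eq_of_mem_reflectionGroup (hΦfin : Φ.Finite) (hΦ : IsReflectionStable Φ)
    (hv : IsRegularVector Φ v) {w : E ≃ₗ[ℝ] E} (hw : w ∈ reflectionGroup Φ) :
    ∃ L : List (E ≃ₗ[ℝ] E), (∀ s ∈ L, s ∈ simpleReflections Φ v) ∧ L.prod = w := by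
  have hinv : (simpleReflections Φ v)⁻¹ ⊆ simpleReflections Φ v := by
    rintro s ⟨γ, hγ, hs⟩
    exact ⟨γ, hγ, by rw [← orthoReflectionEquiv_inv, hs, inv_inv]⟩
  have hw' : w ∈ (Subgroup.closure (simpleReflections Φ v)).toSubmonoid :=
    reflectionGroup_le_closure_simpleReflections hΦfin hΦ hv hw
  rw [Subgroup.closure_toSubmonoid, Set.union_eq_left.2 hinv] at hw'
  exact Submonoid.exists_list_of_mem_closure hw'

/-! ### The action on positive systems is free -/

lemma list_prod_mem_reflectionGroup {L : List (E ≃ₗ[ℝ] E)}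
    (hL : ∀ s ∈ L, s ∈ simpleReflections Φ v) : L.prod ∈ reflectionGroup Φ := by
  refine list_prod_mem fun s hs ↦ ?_
  obtain ⟨γ, hγ, rfl⟩ := hL s hs
  exact orthoReflectionEquiv_mem_reflectionGroup hγ.1.1

lemma exists_shorter_list_prod_eq_mul {L : List (E ≃ₗ[ℝ] E)}
    (hL : ∀ s ∈ L, s ∈ simpleReflections Φ v) {γ : E} (hγ : γ ∈ positiveRoots Φ v)
    (hneg : L.prod γ ∉ positiveRoots Φ v) :
    ∃ L' : List (E ≃ₗ[ℝ] E), (∀ s ∈ L', s ∈ simpleReflections Φ v) ∧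
      L'.length < L.length ∧ L'.prod = L.prod * orthoReflectionEquiv γ := by
  induction L with
  | nil => exact absurd hγ hneg
  | cons s M ih =>
    obtain ⟨hs, hM⟩ := List.forall_mem_cons.1 hL
    by_cases hMγ : M.prod γ ∈ positiveRoots Φ v
    -- The letter `s` is the one making `M.prod γ` negative, so it is conjugate to `s_γ` by `M`.
    · obtain ⟨δ, hδ, rfl⟩ := hs
      have hspan : M.prod γ ∈ ℝ ∙ δ := (hδ.2 _ hMγ).resolve_right (by simpa using hneg)
      have hconj := orthoReflectionEquiv_map_mul
        (inner_map_map_of_mem_reflectionGroup (list_prod_mem_reflectionGroup hM)) γ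
      rw [orthoReflectionEquiv_eq_of_mem_span (ne_zero_of_mem_positiveRoots hMγ) hspan] at hconj
      refine ⟨M, hM, by simp, ?_⟩
      rw [List.prod_cons, mul_assoc, ← hconj, ← mul_assoc, orthoReflectionEquiv_mul_self, one_mul]
    · obtain ⟨M', hM', hlen, hprod⟩ := ih hM hMγ
      exact ⟨s :: M', List.forall_mem_cons.2 ⟨hs, hM'⟩, by simpa using hlen,
        by rw [List.prod_cons, List.prod_cons, hprod, mul_assoc]⟩

lemma list_prod_eq_one_of_mapsTo_positiveRoots (L : List (E ≃ₗ[ℝ] E))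
    (hL : ∀ s ∈ L, s ∈ simpleReflections Φ v)
    (hpos : Set.MapsTo L.prod (positiveRoots Φ v) (positiveRoots Φ v)) : L.prod = 1 := by
  induction hn : L.length using Nat.strong_induction_on generalizing L with
  | _ n ih =>
    obtain rfl | ⟨M, s, rfl⟩ := L.eq_nil_or_concat
    · exact List.prod_nil
    rw [List.concat_eq_append] at hL hpos hn ⊢
    rw [List.length_append, List.length_singleton] at hn
    obtain ⟨hM, hs⟩ := List.forall_mem_append.1 hL
    obtain ⟨γ, hγ, rfl⟩ := hs s (List.mem_singleton_self s)
    rw [List.prod_append, List.prod_singleton] at hpos ⊢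
    have hneg : M.prod γ ∉ positiveRoots Φ v := fun h ↦
      neg_notMem_positiveRoots h (by simpa using hpos hγ.1)
    obtain ⟨L', hL', hlen, hprod⟩ := exists_shorter_list_prod_eq_mul hM hγ.1 hneg
    rw [← hprod] at hpos ⊢
    exact ih L'.length (by omega) L' hL' hpos rfl

lemma eq_one_of_mapsTo_positiveRoots (hΦfin : Φ.Finite) (hΦ : IsReflectionStable Φ)
    (hv : IsRegularVector Φ v) {w : E ≃ₗ[ℝ] E} (hw : w ∈ reflectionGroup Φ)
    (hpos : Set.MapsTo w (positiveRoots Φ v) (positiveRoots Φ v)) : w = 1 := by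
  obtain ⟨L, hL, rfl⟩ := exists_list_prod_eq_of_mem_reflectionGroup hΦfin hΦ hv hw
  exact list_prod_eq_one_of_mapsTo_positiveRoots L hL hpos

lemma eq_of_mapsTo_positiveRoots (hΦfin : Φ.Finite) (hΦ : IsReflectionStable Φ)
    (hv : IsRegularVector Φ v) {v' : E} {g h : E ≃ₗ[ℝ] E} (hg : g ∈ reflectionGroup Φ)
    (hh : h ∈ reflectionGroup Φ) (hgpos : Set.MapsTo g (positiveRoots Φ v) (positiveRoots Φ v'))
    (hhpos : Set.MapsTo h (positiveRoots Φ v) (positiveRoots Φ v')) : g = h := by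
  have hmem : g⁻¹ * h ∈ reflectionGroup Φ := mul_mem (inv_mem hg) hh
  have hcancel (α : E) : g ((g⁻¹ * h) α) = h α := g.apply_symm_apply (h α)
  refine inv_mul_eq_one.1 (eq_one_of_mapsTo_positiveRoots hΦfin hΦ hv hmem fun α hα ↦ ?_)
  refine (mem_or_neg_mem_positiveRoots hΦ hv
    (map_mem_of_mem_reflectionGroup hΦ hmem hα.1)).resolve_right fun hneg ↦ ?_
  have hneg' := hgpos hneg
  rw [map_neg, hcancel] at hneg'
  exact neg_notMem_positiveRoots (hhpos hα) hneg'

lemma finite_reflectionGroup (hΦfin : Φ.Finite) (hΦ : IsReflectionStable Φ)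
    (hv : IsRegularVector Φ v) : Finite (reflectionGroup Φ) := by
  have := hΦfin.to_subtype
  refine Finite.of_injective (β := Φ → Φ)
    (fun w α ↦ ⟨w.1 α, map_mem_of_mem_reflectionGroup hΦ w.2 α.2⟩) fun g h hgh ↦ ?_
  have hΦ_eq (α : E) (hα : α ∈ Φ) : g.1 α = h.1 α := congrArg Subtype.val (congrFun hgh ⟨α, hα⟩)
  refine inv_mul_eq_one.1 (Subtype.ext (eq_one_of_mapsTo_positiveRoots hΦfin hΦ hv
    (g⁻¹ * h).2 fun α hα ↦ ?_))
  have hfix : (g⁻¹ * h).1 α = α := (g.1.symm_apply_eq).2 (hΦ_eq α hα.1).symm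
  rwa [hfix]

/-! ### Lexicographic refinement -/

lemma eventually_sign_add_mul (a b : ℝ) :
    ∀ᶠ ε in nhdsWithin (0 : ℝ) (Set.Ioi 0),
      SignType.sign (a + ε * b) = if a = 0 then SignType.sign b else SignType.sign a := by
  split_ifs with ha
  · filter_upwards [self_mem_nhdsWithin] with ε hε
    rw [ha, zero_add, sign_mul, sign_pos hε, one_mul]
  · have hcont : ContinuousAt (fun ε : ℝ ↦ SignType.sign (a + ε * b)) 0 :=
      ContinuousAt.comp' (by simpa using continuousAt_sign_of_ne_zero ha) (by fun_prop)
    have hsign := hcont.eventually (isOpen_discrete {SignType.sign a} |>.mem_nhds (by simp))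
    exact hsign.filter_mono nhdsWithin_le_nhds

lemma exists_isRegularVector_positiveRoots_eq_lexPositiveRoots (hΦfin : Φ.Finite)
    (hv : IsRegularVector Φ v) (x : E) :
    ∃ u, IsRegularVector Φ u ∧ positiveRoots Φ u = lexPositiveRoots Φ x v := by
  obtain ⟨ε, hε⟩ := ((Filter.eventually_all_finite hΦfin).2 fun α _ ↦
    eventually_sign_add_mul ⟪α, x⟫ ⟪α, v⟫).exists
  simp_rw [← real_inner_smul_right, ← inner_add_right] at hε
  refine ⟨x + ε • v, fun α hα ↦ ?_, ?_⟩
  · rw [← sign_ne_zero, hε α hα]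
    split_ifs with h
    · exact sign_ne_zero.2 (hv α hα)
    · exact sign_ne_zero.2 h
  · ext α
    refine and_congr_right fun hα ↦ ?_
    rw [← sign_eq_one_iff, hε α hα]
    split_ifs with h <;> simp [h, sign_eq_one_iff]

lemma mapsTo_lexPositiveRoots_map {g : E ≃ₗ[ℝ] E} (hg : ∀ x y, ⟪g x, g y⟫ = ⟪x, y⟫)
    (hgΦ : Set.MapsTo g Φ Φ) (x : E)
    (hpos : ∀ α ∈ positiveRoots Φ v, ⟪α, x⟫ = 0 → g α ∈ positiveRoots Φ v) :
    Set.MapsTo g (lexPositiveRoots Φ x v) (lexPositiveRoots Φ (g x) v) := by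
  rintro α ⟨hα, hlex⟩
  refine ⟨hgΦ hα, ?_⟩
  rw [hg]
  exact hlex.imp_right fun ⟨horth, hαv⟩ ↦ ⟨horth, (hpos α ⟨hα, hαv⟩ horth).2⟩

lemma exists_mem_reflectionGroup_mapsTo_lexPositiveRoots (hΦfin : Φ.Finite)
    (hΦ : IsReflectionStable Φ) (hv : IsRegularVector Φ v) {w : E ≃ₗ[ℝ] E}
    (hw : w ∈ reflectionGroup Φ) (x : E) :
    ∃ g ∈ reflectionGroup Φ, g x = w x ∧
      Set.MapsTo g (lexPositiveRoots Φ x v) (lexPositiveRoots Φ (w x) v) := by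
  have : Finite (reflectionGroup Φ) := finite_reflectionGroup hΦfin hΦ hv
  obtain ⟨g, ⟨hg, hgx⟩, hmax⟩ := Set.exists_max_image
    {g | g ∈ reflectionGroup Φ ∧ g x = w x} (fun g ↦ ⟪g v, v⟫)
    ((Set.toFinite (reflectionGroup Φ : Set (E ≃ₗ[ℝ] E))).subset fun g hg ↦ hg.1) ⟨w, hw, rfl⟩
  refine ⟨g, hg, hgx, hgx ▸ mapsTo_lexPositiveRoots_map (inner_map_map_of_mem_reflectionGroup hg)
    (fun α ↦ map_mem_of_mem_reflectionGroup hΦ hg) x fun α hα hαx ↦ ?_⟩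
  have hgα := map_mem_of_mem_reflectionGroup hΦ hg hα.1
  refine ⟨hgα, (hv _ hgα).symm.lt_of_le ?_⟩
  have hfix : orthoReflection α x = x := by simp [orthoReflection, real_inner_comm α x, hαx]
  have hle : ⟪g (orthoReflection α v), v⟫ ≤ ⟪g v, v⟫ := by
    simpa using hmax (g * orthoReflectionEquiv α)
      ⟨mul_mem hg (orthoReflectionEquiv_mem_reflectionGroup hα.1), by simp [hfix, hgx]⟩
  have hcoeff : 0 < 2 * ⟪v, α⟫ / ⟪α, α⟫ := by
    have := real_inner_self_pos.2 (ne_zero_of_mem_positiveRoots hα)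
    have := real_inner_comm α v ▸ hα.2
    positivity
  rw [orthoReflection, map_sub, map_smul, inner_sub_left, real_inner_smul_left,
    sub_le_self_iff] at hle
  exact nonneg_of_mul_nonneg_right hle hcoeff

lemma eq_of_mapsTo_lexPositiveRoots (hΦfin : Φ.Finite) (hΦ : IsReflectionStable Φ)
    (hv : IsRegularVector Φ v) {x y : E} {g h : E ≃ₗ[ℝ] E} (hg : g ∈ reflectionGroup Φ)
    (hh : h ∈ reflectionGroup Φ)
    (hglex : Set.MapsTo g (lexPositiveRoots Φ x v) (lexPositiveRoots Φ y v))
    (hhlex : Set.MapsTo h (lexPositiveRoots Φ x v) (lexPositiveRoots Φ y v)) : g = h := by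
  obtain ⟨u, hu, hux⟩ :=
    exists_isRegularVector_positiveRoots_eq_lexPositiveRoots hΦfin hv x
  obtain ⟨u', -, huy⟩ :=
    exists_isRegularVector_positiveRoots_eq_lexPositiveRoots hΦfin hv y
  rw [← hux, ← huy] at hglex hhlex
  exact eq_of_mapsTo_positiveRoots hΦfin hΦ hu hg hh hglex hhlex

/-! ### Diagram automorphisms -/

/-- An orthogonal transformation preserving the positive system of `v`: the abstraction of a
diagram automorphism of a Weyl group. -/
structure IsDiagramAutomorphism (Φ : Set E) (v : E) (ξ : E ≃ₗ[ℝ] E) : Prop where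
  inner_map_map (x y : E) : ⟪ξ x, ξ y⟫ = ⟪x, y⟫
  image_positiveRoots : ξ '' positiveRoots Φ v = positiveRoots Φ v

namespace IsDiagramAutomorphism

variable {ξ : E ≃ₗ[ℝ] E}

lemma inv (hξ : IsDiagramAutomorphism Φ v ξ) : IsDiagramAutomorphism Φ v ξ⁻¹ where
  inner_map_map x y := by
    rw [← hξ.inner_map_map]
    exact congrArg₂ _ (ξ.apply_symm_apply x) (ξ.apply_symm_apply y)
  image_positiveRoots :=
    (congrArg _ hξ.image_positiveRoots.symm).trans (ξ.symm_image_image _)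

lemma mapsTo_positiveRoots (hξ : IsDiagramAutomorphism Φ v ξ) :
    Set.MapsTo ξ (positiveRoots Φ v) (positiveRoots Φ v) :=
  Set.mapsTo_iff_image_subset.2 hξ.image_positiveRoots.subset

lemma mapsTo (hξ : IsDiagramAutomorphism Φ v ξ) (hΦ : IsReflectionStable Φ)
    (hv : IsRegularVector Φ v) : Set.MapsTo ξ Φ Φ :=
  mapsTo_of_mapsTo_positiveRoots hΦ hv hξ.mapsTo_positiveRoots

lemma mapsTo_lexPositiveRoots (hξ : IsDiagramAutomorphism Φ v ξ) (hΦ : IsReflectionStable Φ)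
    (hv : IsRegularVector Φ v) {x : E} (hx : ξ x = x) :
    Set.MapsTo ξ (lexPositiveRoots Φ x v) (lexPositiveRoots Φ x v) := by
  have hmaps := mapsTo_lexPositiveRoots_map hξ.inner_map_map (hξ.mapsTo hΦ hv) x
    fun α hα _ ↦ hξ.mapsTo_positiveRoots hα
  rwa [hx] at hmaps

end IsDiagramAutomorphism

end ReflectionPositiveSystems

theorem fixed_by_diagram_automorphisms_conjugate_by_centralizer_general
    {E : Type*} [NormedAddCommGroup E] [InnerProductSpace ℝ E]
    {Φ : Set E} (hΦfin : Φ.Finite) (hΦ : IsReflectionStable Φ)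
    {v : E} (hv : IsRegularVector Φ v)
    {Ξ : Set (E ≃ₗ[ℝ] E)} (hΞ : ∀ ξ ∈ Ξ, IsDiagramAutomorphism Φ v ξ)
    {x : E} (hfix : ∀ ξ ∈ Ξ, ξ x = x) {w : E ≃ₗ[ℝ] E} (hw : w ∈ reflectionGroup Φ)
    (hfix' : ∀ ξ ∈ Ξ, ξ (w x) = w x) :
    ∃ w₀ ∈ reflectionGroup Φ, (∀ ξ ∈ Ξ, w₀ * ξ = ξ * w₀) ∧ w₀ x = w x := by
  obtain ⟨g, hg, hgx, hglex⟩ :=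
    exists_mem_reflectionGroup_mapsTo_lexPositiveRoots hΦfin hΦ hv hw x
  refine ⟨g, hg, fun ξ hξ ↦ ?_, hgx⟩
  have hconj_mem : ξ * g * ξ⁻¹ ∈ reflectionGroup Φ :=
    conj_mem_reflectionGroup (hΞ ξ hξ).inner_map_map ((hΞ ξ hξ).mapsTo hΦ hv) hg
  have hinv_fix : ξ⁻¹ x = x := ξ.symm_apply_eq.2 (hfix ξ hξ).symm
  have hconj_lex :
      Set.MapsTo (ξ * g * ξ⁻¹) (lexPositiveRoots Φ x v) (lexPositiveRoots Φ (w x) v) :=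
    ((hΞ ξ hξ).mapsTo_lexPositiveRoots hΦ hv (hfix' ξ hξ)).comp
      (hglex.comp ((hΞ ξ hξ).inv.mapsTo_lexPositiveRoots hΦ hv hinv_fix))
  have hconj_eq : ξ * g * ξ⁻¹ = g :=
    eq_of_mapsTo_lexPositiveRoots hΦfin hΦ hv hconj_mem hg hconj_lex hglex
  exact (mul_inv_eq_iff_eq_mul.1 hconj_eq).symm

/-- let `Φ` be a finite set of nonzero vectors in a finite-dimensional real
inner product space `E`, stable under all the orthogonal reflections `s_α`, `α ∈ Φ`, and let
`W` be the subgroup generated by these reflections.  Let `Φ⁺` be a positive system for `Φ`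
and `Ξ` a subgroup of orthogonal transformations with `Ξ(Φ⁺) = Φ⁺`.  If `λ, λ'` are fixed by
`Ξ` and `W`-conjugate, then they are conjugate by an element of `W` commuting with every
element of `Ξ`. -/
theorem fixed_by_diagram_automorphisms_conjugate_by_centralizer
    {E : Type*} [NormedAddCommGroup E] [InnerProductSpace ℝ E] [FiniteDimensional ℝ E]
    (Φ : Set E) (hΦfin : Φ.Finite) (hΦ0 : (0 : E) ∉ Φ)
    (hstab : ∀ α ∈ Φ, ∀ β ∈ Φ, orthoReflection α β ∈ Φ)
    (W : Subgroup (E ≃ₗ[ℝ] E))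
    (hW : W = Subgroup.closure
      {w : E ≃ₗ[ℝ] E | ∃ α ∈ Φ, ∀ x : E, w x = orthoReflection α x})
    (v₀ : E) (hv₀ : ∀ α ∈ Φ, ⟪α, v₀⟫ ≠ 0)
    (Φp : Set E) (hΦp : Φp = {α ∈ Φ | 0 < ⟪α, v₀⟫})
    (Ξ : Subgroup (E ≃ₗ[ℝ] E))
    (hΞorth : ∀ ξ ∈ Ξ, ∀ x y : E, ⟪ξ x, ξ y⟫ = ⟪x, y⟫)
    (hΞΦp : ∀ ξ ∈ Ξ, (ξ : E → E) '' Φp = Φp)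
    (lam lam' : E)
    (hfix : ∀ ξ ∈ Ξ, ξ lam = lam) (hfix' : ∀ ξ ∈ Ξ, ξ lam' = lam')
    (w : E ≃ₗ[ℝ] E) (hw : w ∈ W) (hwl : w lam = lam') :
    ∃ w₀ ∈ W, (∀ ξ ∈ Ξ, w₀ * ξ = ξ * w₀) ∧ w₀ lam = lam' := by
  obtain rfl := hW.trans (closure_orthoReflection_eq_reflectionGroup Φ)
  subst hΦp hwl
  exact fixed_by_diagram_automorphisms_conjugate_by_centralizer_general hΦfin hstab hv₀
    (fun ξ hξ ↦ ⟨hΞorth ξ hξ, hΞΦp ξ hξ⟩) hfix hw hfix'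
end

section
/- Let 𝔤 be a finite-dimensional complex semisimple Lie algebra with Killing form κ, and let (e,h,f) be an sl₂-triple in 𝔤 (so [h,e] = 2e, [h,f] = −2f, [e,f] = h, with e ≠ 0). Then 𝔤 decomposes as a direct sum of vector spaces 𝔤 = [𝔤, f] ⊕ 𝔷_𝔤(e), where 𝔷_𝔤(e) = {x ∈ 𝔤 : [e,x] = 0}, and the skew-symmetric bilinear form ω(x,y) := κ(e, [x,y]) on 𝔤 restricts to a nondegenerate (symplectic) form on the subspace V := [𝔤, f]. -/
/-!
If `⁅f, ⁅e, m⁆⁆ = 0` and `f ^ n` kills `m`, then commuting `e` past powers of `f` shows that the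
falling factorial `h (h - 1) ⋯ (h - n + 1)` kills `m`. If `e` annihilates `⁅f, w⁆`, this applies
both to `⁅f, w⁆` and, for the opposite triple `(-h, f, e)`, to `w`. The former confines the
eigenvalues of `h` on `⁅f, w⁆` to `0, 1, 2, …`; the latter, since `f` lowers weights by `2`, to
`-2, -3, -4, …`. Hence `⁅f, w⁆ = 0`, so the range of `f` meets the kernel of `e` trivially in every
finite-dimensional representation, and a dimension count with the roles of `e` and `f` exchanged
upgrades this to a direct sum decomposition.

If `x` in the range of `ad f` is orthogonal to that range for `ω`, invariance gives
`⁅f, ⁅e, x⁆⁆ = 0`; the trivial intersections for the two triples yield `⁅e, x⁆ = 0`, then `x = 0`.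
-/

open LieModule Polynomial

section LinearAlgebra

theorem comp_aeval_eq_aeval_comp {R M N : Type*} [CommSemiring R] [AddCommMonoid M]
    [AddCommMonoid N] [Module R M] [Module R N] {A : Module.End R M} {B : Module.End R N}
    {φ : M →ₗ[R] N} (h : φ ∘ₗ A = B ∘ₗ φ) (p : R[X]) :
    φ ∘ₗ aeval A p = aeval B p ∘ₗ φ := by
  induction p using Polynomial.induction_on' with
  | add p q hp hq => simp only [map_add, LinearMap.comp_add, LinearMap.add_comp, hp, hq]
  | monomial n a =>
    simp only [aeval_monomial, ← Algebra.smul_def, LinearMap.comp_smul, LinearMap.smul_comp,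
      Module.End.commute_pow_left_of_commute h.symm]

theorem isCompl_range_ker_of_disjoint {K V W : Type*} [DivisionRing K] [AddCommGroup V]
    [AddCommGroup W] [Module K V] [Module K W] [Module.Finite K V] [Module.Finite K W]
    {F : V →ₗ[K] W} {E : W →ₗ[K] V} (hFE : Disjoint F.range E.ker) (hEF : Disjoint E.range F.ker) :
    IsCompl F.range E.ker := by
  have h_rank := Submodule.finrank_add_finrank_le_of_disjoint hEF
  have hE := E.finrank_range_add_finrank_ker
  have hF := F.finrank_range_add_finrank_ker
  exact (Submodule.isCompl_iff_disjoint _ _ (by lia)).mpr hFE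

theorem isCoprime_descPochhammer_comp_neg_X_sub_two (K : Type*) [Field K] [CharZero K] (m n : ℕ) :
    IsCoprime (descPochhammer K m) ((descPochhammer K n).comp (-X - 2)) := by
  induction m with
  | zero => simp [isCoprime_one_left]
  | succ m ih =>
    have h_eval : ((descPochhammer K n).comp (-X - 2)).eval (m : K) ≠ 0 := by
      rw [eval_comp, descPochhammer_eval_eq_prod_range, Finset.prod_ne_zero_iff]
      intro j _ hj
      have h_sum : ((m + 2 + j : ℕ) : K) = 0 := by
        simp only [eval_sub, eval_neg, eval_X, eval_ofNat] at hj
        push_cast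
        linear_combination -hj
      exact (show m + 2 + j ≠ 0 by lia) (Nat.cast_eq_zero.mp h_sum)
    rw [descPochhammer_succ_right, ← C_eq_natCast]
    refine ih.mul_left ?_
    rwa [(irreducible_X_sub_C _).coprime_iff_not_dvd, dvd_iff_isRoot]

end LinearAlgebra

section Ring

variable {R L M : Type*} [CommRing R] [LieRing L] [LieAlgebra R L] [AddCommGroup M] [Module R M]
  [LieRingModule L M] [LieModule R L M] {h e f : L}

theorem lie_e_pow_succ_toEnd_f_apply (t : IsSl2Triple h e f) (n : ℕ) (m : M) :
    ⁅e, (toEnd R L M f ^ (n + 1)) m⁆ = (toEnd R L M f ^ (n + 1)) ⁅e, m⁆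
      + (n + 1) • (toEnd R L M f ^ n) (⁅h, m⁆ - n • m) := by
  induction n generalizing m with
  | zero => simp [leibniz_lie e f m, t.lie_e_f, add_comm]
  | succ n ih =>
    have h_pow (k : ℕ) (v : M) :
        (toEnd R L M f ^ (k + 1)) v = (toEnd R L M f ^ k) ⁅f, v⁆ := by
      rw [pow_succ, Module.End.mul_apply, toEnd_apply_apply]
    rw [h_pow (n + 1), h_pow (n + 1), ih, leibniz_lie e f m, leibniz_lie h f m, t.lie_e_f,
      t.lie_h_f_nsmul]
    simp only [neg_lie, nsmul_lie, map_add, map_sub, map_neg, map_nsmul, h_pow n, lie_add, lie_sub,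
      lie_nsmul]
    module

theorem aeval_toEnd_h_descPochhammer_apply_eq_zero [IsAddTorsionFree M] (t : IsSl2Triple h e f)
    {n : ℕ} {m : M} (hfe : ⁅f, ⁅e, m⁆⁆ = 0) (hfn : (toEnd R L M f ^ n) m = 0) :
    aeval (toEnd R L M h) (descPochhammer R n) m = 0 := by
  induction n generalizing m with
  | zero => simpa using hfn
  | succ n ih =>
    have h_stable : ⁅f, ⁅e, ⁅h, m⁆ - n • m⁆⁆ = 0 := by
      have heh : ⁅e, ⁅h, m⁆⁆ = ⁅h, ⁅e, m⁆⁆ - 2 • ⁅e, m⁆ := by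
        rw [leibniz_lie h, t.lie_h_e_nsmul, nsmul_lie, add_sub_cancel_left]
      have hfh : ⁅f, ⁅h, ⁅e, m⁆⁆⁆ = 0 := by
        simpa [hfe, t.lie_h_f_nsmul] using (leibniz_lie h f ⁅e, m⁆).symm
      simp [heh, hfh, hfe]
    have h_pow : (toEnd R L M f ^ n) (⁅h, m⁆ - n • m) = 0 := by
      have h_comm := lie_e_pow_succ_toEnd_f_apply (R := R) t n m
      rw [hfn, lie_zero, pow_succ, Module.End.mul_apply, toEnd_apply_apply, hfe, map_zero,
        zero_add] at h_comm
      simpa using h_comm.symm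
    simpa [descPochhammer_succ_right] using ih h_stable h_pow

theorem lie_lie_eq_zero_of_lieInvariant {Φ : LinearMap.BilinForm R L} (hΦ_inv : Φ.lieInvariant L)
    (hΦ : Φ.SeparatingLeft) {x : L} (hx : ∀ y, Φ e ⁅x, ⁅f, y⁆⁆ = 0) : ⁅f, ⁅e, x⁆⁆ = 0 := by
  refine hΦ _ fun y ↦ ?_
  calc Φ ⁅f, ⁅e, x⁆⁆ y = -Φ ⁅e, x⁆ ⁅f, y⁆ := hΦ_inv _ _ _
    _ = Φ ⁅x, e⁆ ⁅f, y⁆ := by rw [← lie_skew x e, map_neg, LinearMap.neg_apply]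
    _ = -Φ e ⁅x, ⁅f, y⁆⁆ := hΦ_inv _ _ _
    _ = 0 := by rw [hx, neg_zero]

end Ring

section Field

variable {K L M : Type*} [Field K] [CharZero K] [LieRing L] [LieAlgebra K L] [AddCommGroup M]
  [Module K M] [LieRingModule L M] [LieModule K L M] {h e f : L}

theorem isSl2Triple_of_e_ne_zero (he : e ≠ 0) (hhe : ⁅h, e⁆ = (2 : K) • e)
    (hhf : ⁅h, f⁆ = (-2 : K) • f) (hef : ⁅e, f⁆ = h) : IsSl2Triple h e f where
  h_ne_zero := by
    rintro rfl
    exact he ((smul_eq_zero.mp (hhe.symm.trans (zero_lie e))).resolve_left two_ne_zero)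
  lie_e_f := hef
  lie_h_e_nsmul := by rw [hhe, ofNat_smul_eq_nsmul]
  lie_h_f_nsmul := by rw [hhf, neg_smul, ofNat_smul_eq_nsmul]

variable [Module.Finite K M]

-- The powers of `y` would otherwise be eigenvectors of `⁅x, ·⁆` for the distinct eigenvalues `n c`.
theorem isNilpotent_toEnd_of_lie_eq_smul {x y : L} {c : K} (hc : c ≠ 0) (hxy : ⁅x, y⁆ = c • y) :
    IsNilpotent (toEnd K L M y) := by
  by_contra h_nil
  have h_eigen (n : ℕ) :
      (toEnd K L (M →ₗ[K] M) x).HasEigenvector (n * c) (toEnd K L M y ^ n) := by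
    refine ⟨Module.End.mem_eigenspace_iff.mpr ?_, fun h_zero ↦ h_nil ⟨n, h_zero⟩⟩
    induction n with
    | zero => ext; simp
    | succ n ih =>
      ext m
      have ih_apply := LinearMap.congr_fun ih ⁅y, m⁆
      simp only [toEnd_apply_apply, LieHom.lie_apply, LinearMap.smul_apply, leibniz_lie x y m, hxy,
        smul_lie, map_add, map_smul, pow_succ, Module.End.mul_apply] at ih_apply ⊢
      rw [Nat.cast_succ, add_one_mul, add_smul, ← ih_apply]
      abel
  have h_inj : Function.Injective fun n : ℕ ↦ n * c := fun a b hab ↦ by simpa [hc] using hab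
  have h_finite : Finite ℕ :=
    (Module.End.eigenvectors_linearIndependent' _ _ h_inj _ h_eigen).finite
  exact not_finite ℕ

theorem disjoint_range_toEnd_f_ker_toEnd_e (t : IsSl2Triple h e f) :
    Disjoint (toEnd K L M f).range (toEnd K L M e).ker := by
  have : IsAddTorsionFree M := .of_isTorsionFree K M
  obtain ⟨a, ha⟩ : IsNilpotent (toEnd K L M f) :=
    isNilpotent_toEnd_of_lie_eq_smul (neg_ne_zero.mpr two_ne_zero)
      ((t.lie_lie_smul_f K).trans (neg_smul _ _).symm)
  obtain ⟨b, hb⟩ : IsNilpotent (toEnd K L M e) :=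
    isNilpotent_toEnd_of_lie_eq_smul two_ne_zero (t.lie_h_e_smul K)
  rw [Submodule.disjoint_def]
  rintro _ ⟨w, rfl⟩ (hw : ⁅e, ⁅f, w⁆⁆ = 0)
  have h_nonneg : aeval (toEnd K L M h) (descPochhammer K a) ⁅f, w⁆ = 0 :=
    aeval_toEnd_h_descPochhammer_apply_eq_zero t (by rw [hw, lie_zero]) (by simp [ha])
  have h_nonpos : aeval (toEnd K L M (-h)) (descPochhammer K b) w = 0 :=
    aeval_toEnd_h_descPochhammer_apply_eq_zero t.symm hw (by simp [hb])
  have h_shift : toEnd K L M f ∘ₗ toEnd K L M (-h)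
      = aeval (toEnd K L M h) (-X - 2 : K[X]) ∘ₗ toEnd K L M f := by
    ext v
    simp [leibniz_lie h f v, t.lie_h_f_nsmul, map_ofNat]
  have h_le_neg_two : aeval (toEnd K L M h) ((descPochhammer K b).comp (-X - 2)) ⁅f, w⁆ = 0 := by
    have h_comp := LinearMap.congr_fun (comp_aeval_eq_aeval_comp h_shift (descPochhammer K b)) w
    rw [LinearMap.comp_apply, h_nonpos, map_zero] at h_comp
    rw [aeval_comp]
    exact h_comp.symm
  exact Submodule.disjoint_def.mp (disjoint_ker_aeval_of_isCoprime _
    (isCoprime_descPochhammer_comp_neg_X_sub_two K a b)) _ h_nonneg h_le_neg_two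

theorem isCompl_range_toEnd_f_ker_toEnd_e (t : IsSl2Triple h e f) :
    IsCompl (toEnd K L M f).range (toEnd K L M e).ker :=
  isCompl_range_ker_of_disjoint (disjoint_range_toEnd_f_ker_toEnd_e t)
    (disjoint_range_toEnd_f_ker_toEnd_e t.symm)

theorem sl2_triple_symplectic_slice_decomposition_general [Module.Finite K L]
    (t : IsSl2Triple h e f) {Φ : LinearMap.BilinForm K L} (hΦ_inv : Φ.lieInvariant L)
    (hΦ : Φ.SeparatingLeft) :
    IsCompl (LieAlgebra.ad K L f).range (LieAlgebra.ad K L e).ker ∧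
    (∀ x y : L, Φ e ⁅x, y⁆ = -Φ e ⁅y, x⁆) ∧
    (∀ x ∈ (LieAlgebra.ad K L f).range,
      (∀ y ∈ (LieAlgebra.ad K L f).range, Φ e ⁅x, y⁆ = 0) → x = 0) := by
  refine ⟨isCompl_range_toEnd_f_ker_toEnd_e t, fun x y ↦ by rw [← lie_skew x y, map_neg], ?_⟩
  intro x hx h_orth
  have hfex : ⁅f, ⁅e, x⁆⁆ = 0 :=
    lie_lie_eq_zero_of_lieInvariant hΦ_inv hΦ fun y ↦ h_orth ⁅f, y⁆ ⟨y, rfl⟩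
  have hex : ⁅e, x⁆ = 0 :=
    Submodule.disjoint_def.mp (disjoint_range_toEnd_f_ker_toEnd_e (K := K) t.symm) _ ⟨x, rfl⟩ hfex
  exact Submodule.disjoint_def.mp (disjoint_range_toEnd_f_ker_toEnd_e t) x hx hex

end Field

/-- let `𝔤` be a finite-dimensional complex semisimple Lie algebra with Killing
form `κ`, and `(e,h,f)` an `sl₂`-triple with `e ≠ 0`.  Then `𝔤 = [𝔤,f] ⊕ 𝔷_𝔤(e)` as vector
spaces, the form `ω(x,y) = κ(e,[x,y])` is skew-symmetric, and it restricts to a nondegenerate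
(symplectic) form on the subspace `V = [𝔤,f]`. -/
theorem sl2_triple_symplectic_slice_decomposition
    (L : Type*) [LieRing L] [LieAlgebra ℂ L] [Module.Finite ℂ L]
    [LieAlgebra.IsSemisimple ℂ L]
    (e h f : L) (he : e ≠ 0)
    (hhe : ⁅h, e⁆ = (2 : ℂ) • e) (hhf : ⁅h, f⁆ = (-2 : ℂ) • f) (hef : ⁅e, f⁆ = h) :
    IsCompl (LinearMap.range (LieAlgebra.ad ℂ L f)) (LinearMap.ker (LieAlgebra.ad ℂ L e)) ∧
    (∀ x y : L, killingForm ℂ L e ⁅x, y⁆ = - killingForm ℂ L e ⁅y, x⁆) ∧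
    (∀ x ∈ LinearMap.range (LieAlgebra.ad ℂ L f),
      (∀ y ∈ LinearMap.range (LieAlgebra.ad ℂ L f), killingForm ℂ L e ⁅x, y⁆ = 0) →
      x = 0) :=
  sl2_triple_symplectic_slice_decomposition_general (isSl2Triple_of_e_ne_zero he hhe hhf hef)
    (traceForm_lieInvariant ℂ L L) (LieAlgebra.IsKilling.killingForm_nondegenerate ℂ L).1
end
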